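/- arXiv:1207.4016 — 9 statements merged into one kernel-verified Lean document; each statement's English description precedes it below -/
import Mathlib

section
/- Let n ≥ 1 and A, B > 0. Let F₀, Fₑ : ℝⁿ × ℝ → ℝⁿ be continuously differentiable in the variable z, with the bounds, valid for all z, z' ∈ ℝⁿ and t ∈ ℝ: ‖D_zF₀(z,t)‖ ≤ A, ‖D_zFₑ(z,t)‖ ≤ A, ‖D_zFₑ(z,t) − D_zFₑ(z',t)‖ ≤ A‖z − z'‖, ‖Fₑ(z,t) − F₀(z,t)‖ ≤ B, and ‖D_zFₑ(z,t) − D_zF₀(z,t)‖ ≤ B. Let T > 0, let z, zₑ : [0,T] → ℝⁿ be differentiable curves with z'(t) = F₀(z(t),t), zₑ'(t) = Fₑ(zₑ(t),t) and z(0) = zₑ(0), and let v ∈ ℝⁿ. Let δz, δzₑ : [0,T] → ℝⁿ solve the variational equations δz'(t) = D_zF₀(z(t),t)·δz(t) and δzₑ'(t) = D_zFₑ(zₑ(t),t)·δzₑ(t) with δz(0) = δzₑ(0) = v. Then for every t ∈ [0,T], ‖δzₑ(t) − δz(t)‖ ≤ (B/A)‖v‖(1 − e^{−At})e^{2At}.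 -/
open Set

/-- First-order (second-variation) Gronwall estimate in Lemma 4.2 of the paper:
comparison of the solutions of the variational equations along solutions of a
perturbed and of an unperturbed ODE with the same initial data. -/
theorem stmt_1 (n : ℕ) (hn : 1 ≤ n) (A B : ℝ) (hA : 0 < A) (hB : 0 < B)
    (F₀ Fₑ : EuclideanSpace ℝ (Fin n) → ℝ → EuclideanSpace ℝ (Fin n))
    (hF₀d : ∀ t : ℝ, ContDiff ℝ 1 fun z => F₀ z t)
    (hFₑd : ∀ t : ℝ, ContDiff ℝ 1 fun z => Fₑ z t)
    (hDF₀ : ∀ (z : EuclideanSpace ℝ (Fin n)) (t : ℝ),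
      ‖fderiv ℝ (fun w => F₀ w t) z‖ ≤ A)
    (hDFₑ : ∀ (z : EuclideanSpace ℝ (Fin n)) (t : ℝ),
      ‖fderiv ℝ (fun w => Fₑ w t) z‖ ≤ A)
    (hDFₑlip : ∀ (z z' : EuclideanSpace ℝ (Fin n)) (t : ℝ),
      ‖fderiv ℝ (fun w => Fₑ w t) z - fderiv ℝ (fun w => Fₑ w t) z'‖ ≤ A * ‖z - z'‖)
    (hFB : ∀ (z : EuclideanSpace ℝ (Fin n)) (t : ℝ), ‖Fₑ z t - F₀ z t‖ ≤ B)
    (hDFB : ∀ (z : EuclideanSpace ℝ (Fin n)) (t : ℝ),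
      ‖fderiv ℝ (fun w => Fₑ w t) z - fderiv ℝ (fun w => F₀ w t) z‖ ≤ B)
    (T : ℝ) (hT : 0 < T)
    (z zₑ δz δzₑ : ℝ → EuclideanSpace ℝ (Fin n)) (v : EuclideanSpace ℝ (Fin n))
    (hz : ∀ t ∈ Icc (0 : ℝ) T, HasDerivAt z (F₀ (z t) t) t)
    (hzₑ : ∀ t ∈ Icc (0 : ℝ) T, HasDerivAt zₑ (Fₑ (zₑ t) t) t)
    (h0 : z 0 = zₑ 0)
    (hδz : ∀ t ∈ Icc (0 : ℝ) T,
      HasDerivAt δz (fderiv ℝ (fun w => F₀ w t) (z t) (δz t)) t)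
    (hδzₑ : ∀ t ∈ Icc (0 : ℝ) T,
      HasDerivAt δzₑ (fderiv ℝ (fun w => Fₑ w t) (zₑ t) (δzₑ t)) t)
    (hδ0 : δz 0 = v) (hδₑ0 : δzₑ 0 = v) :
    ∀ t ∈ Icc (0 : ℝ) T,
      ‖δzₑ t - δz t‖ ≤
        B / A * ‖v‖ * (1 - Real.exp (-(A * t))) * Real.exp (2 * A * t) := by
  have hLip : ∀ (t : ℝ) (x y : EuclideanSpace ℝ (Fin n)), ‖Fₑ x t - Fₑ y t‖ ≤ A * ‖x - y‖ := by
    intro t x y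
    exact Convex.norm_image_sub_le_of_norm_fderiv_le (𝕜 := ℝ) (f := fun w => Fₑ w t) (s := univ)
      (fun u _ => ((hFₑd t).differentiable (by norm_num)).differentiableAt)
      (fun u _ => hDFₑ u t) convex_univ (mem_univ y) (mem_univ x)
  have hAne : A ≠ 0 := hA.ne'
  have hd : ∀ t ∈ Icc (0 : ℝ) T, ‖zₑ t - z t‖ ≤ B / A * (Real.exp (A * t) - 1) := by
    intro t ht
    have h := norm_le_gronwallBound_of_norm_deriv_right_le (f := fun t => zₑ t - z t)
      (f' := fun t => Fₑ (zₑ t) t - F₀ (z t) t) (δ := 0) (K := A) (ε := B) (a := 0) (b := T)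
      (fun s hs => ((hzₑ s hs).sub (hz s hs)).continuousAt.continuousWithinAt)
      (fun s hs => ((hzₑ s (Ico_subset_Icc_self hs)).sub
        (hz s (Ico_subset_Icc_self hs))).hasDerivWithinAt)
      (by simp [h0])
      (by
        intro s hs
        have h1 := norm_add_le (Fₑ (zₑ s) s - Fₑ (z s) s) (Fₑ (z s) s - F₀ (z s) s)
        rw [sub_add_sub_cancel] at h1
        have h2 := hLip s (zₑ s) (z s)
        have h3 := hFB (z s) s
        linarith) t ht
    rw [gronwallBound_of_K_ne_0 hAne] at h
    simpa using h
  have hv : ∀ t ∈ Icc (0 : ℝ) T, ‖δz t‖ ≤ ‖v‖ * Real.exp (A * t) := by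
    intro t ht
    have h := norm_le_gronwallBound_of_norm_deriv_right_le (f := δz)
      (f' := fun t => fderiv ℝ (fun w => F₀ w t) (z t) (δz t))
      (δ := ‖v‖) (K := A) (ε := 0) (a := 0) (b := T)
      (fun s hs => (hδz s hs).continuousAt.continuousWithinAt)
      (fun s hs => (hδz s (Ico_subset_Icc_self hs)).hasDerivWithinAt)
      (by simp [hδ0])
      (by
        intro s hs
        rw [add_zero]
        exact ContinuousLinearMap.le_of_opNorm_le _ (hDF₀ (z s) s) _) t ht
    rw [gronwallBound_ε0] at h
    simpa using h
  have hG : ∀ ε : ℝ, ∀ x : ℝ, HasDerivAt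
      (fun t => B / A * ‖v‖ * (Real.exp (2 * A * t) - Real.exp (A * t)) + ε * Real.exp (2 * A * t))
      (B / A * ‖v‖ * (Real.exp (2 * A * x) * (2 * A) - Real.exp (A * x) * A)
        + ε * (Real.exp (2 * A * x) * (2 * A))) x := by
    intro ε x
    have e1 : HasDerivAt (fun t => Real.exp (2 * A * t)) (Real.exp (2 * A * x) * (2 * A)) x := by
      simpa using ((hasDerivAt_id x).const_mul (2 * A)).exp
    have e2 : HasDerivAt (fun t => Real.exp (A * t)) (Real.exp (A * x) * A) x := by
      simpa using ((hasDerivAt_id x).const_mul A).exp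
    exact ((e1.sub e2).const_mul _).add (e1.const_mul ε)
  have key : ∀ ε : ℝ, 0 < ε → ∀ t ∈ Icc (0 : ℝ) T, ‖δzₑ t - δz t‖ ≤
      B / A * ‖v‖ * (Real.exp (2 * A * t) - Real.exp (A * t)) + ε * Real.exp (2 * A * t) := by
    intro ε hε t ht
    refine image_norm_le_of_norm_deriv_right_lt_deriv_boundary (f := fun t => δzₑ t - δz t)
      (f' := fun t => fderiv ℝ (fun w => Fₑ w t) (zₑ t) (δzₑ t)
        - fderiv ℝ (fun w => F₀ w t) (z t) (δz t)) (a := 0) (b := T)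
      (fun s hs => ((hδzₑ s hs).sub (hδz s hs)).continuousAt.continuousWithinAt)
      (fun s hs => ((hδzₑ s (Ico_subset_Icc_self hs)).sub
        (hδz s (Ico_subset_Icc_self hs))).hasDerivWithinAt)
      (by simp [hδ0, hδₑ0, hε.le]) (hG ε) ?_ ht
    intro s hs hs'
    have hsI := Ico_subset_Icc_self hs
    have hdec : fderiv ℝ (fun w => Fₑ w s) (zₑ s) (δzₑ s)
        - fderiv ℝ (fun w => F₀ w s) (z s) (δz s) =
        fderiv ℝ (fun w => Fₑ w s) (zₑ s) (δzₑ s - δz s)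
        + (fderiv ℝ (fun w => Fₑ w s) (zₑ s) - fderiv ℝ (fun w => Fₑ w s) (z s)) (δz s)
        + (fderiv ℝ (fun w => Fₑ w s) (z s) - fderiv ℝ (fun w => F₀ w s) (z s)) (δz s) := by
      simp only [map_sub, sub_apply]
      abel
    have n1 := ContinuousLinearMap.le_of_opNorm_le _ (hDFₑ (zₑ s) s) (δzₑ s - δz s)
    have n2 := ContinuousLinearMap.le_of_opNorm_le _ (hDFₑlip (zₑ s) (z s) s) (δz s)
    have n3 := ContinuousLinearMap.le_of_opNorm_le _ (hDFB (z s) s) (δz s)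
    have hexp : Real.exp (2 * A * s) = Real.exp (A * s) * Real.exp (A * s) := by
      rw [← Real.exp_add]; ring_nf
    have n4 : (A * ‖zₑ s - z s‖ + B) * ‖δz s‖ ≤ B * ‖v‖ * Real.exp (2 * A * s) := by
      have q : A * ‖zₑ s - z s‖ + B ≤ B * Real.exp (A * s) := by
        have := mul_le_mul_of_nonneg_left (hd s hsI) hA.le
        have e : A * (B / A * (Real.exp (A * s) - 1)) = B * (Real.exp (A * s) - 1) := by
          field_simp
        linarith
      calc _ ≤ (B * Real.exp (A * s)) * (‖v‖ * Real.exp (A * s)) := by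
            gcongr
            exact hv s hsI
        _ = _ := by rw [hexp]; ring
    have hpos : 0 < ε * Real.exp (2 * A * s) * A := by positivity
    have n5 := norm_add₃_le (a := fderiv ℝ (fun w => Fₑ w s) (zₑ s) (δzₑ s - δz s))
      (b := (fderiv ℝ (fun w => Fₑ w s) (zₑ s) - fderiv ℝ (fun w => Fₑ w s) (z s)) (δz s))
      (c := (fderiv ℝ (fun w => Fₑ w s) (z s) - fderiv ℝ (fun w => F₀ w s) (z s)) (δz s))
    have hs2 : ‖δzₑ s - δz s‖ = B / A * ‖v‖ * (Real.exp (2 * A * s) - Real.exp (A * s))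
      + ε * Real.exp (2 * A * s) := hs'
    rw [hs2] at n1
    have e3 : B / A * ‖v‖ * (Real.exp (2 * A * s) * (2 * A) - Real.exp (A * s) * A)
        + ε * (Real.exp (2 * A * s) * (2 * A)) =
        A * (B / A * ‖v‖ * (Real.exp (2 * A * s) - Real.exp (A * s)) + ε * Real.exp (2 * A * s))
        + B * ‖v‖ * Real.exp (2 * A * s) + ε * Real.exp (2 * A * s) * A := by
      field_simp
      ring
    change ‖fderiv ℝ (fun w => Fₑ w s) (zₑ s) (δzₑ s)
        - fderiv ℝ (fun w => F₀ w s) (z s) (δz s)‖ < _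
    rw [hdec, e3]
    linarith
  intro t ht
  have hfin : B / A * ‖v‖ * (1 - Real.exp (-(A * t))) * Real.exp (2 * A * t) =
      B / A * ‖v‖ * (Real.exp (2 * A * t) - Real.exp (A * t)) := by
    have : Real.exp (-(A * t)) * Real.exp (2 * A * t) = Real.exp (A * t) := by
      rw [← Real.exp_add]; ring_nf
    rw [← this]; ring
  rw [hfin]
  refine le_of_forall_pos_le_add fun η hη => ?_
  have h := key (η / Real.exp (2 * A * t)) (by positivity) t ht
  rwa [div_mul_cancel₀ _ (Real.exp_pos _).ne'] at h
end

section
/- Let λ₀ < λ₁ be real numbers and let F : [λ₀,λ₁] × ℝ → ℝ satisfy: (i) for each λ the function F_λ = F(λ,·) is four times continuously differentiable and 2π-periodic; (ii) there is a constant C with |F(λ,x) − F(λ',x)| ≤ C|λ − λ'| for all x and all λ, λ' ∈ [λ₀,λ₁]; (iii) the supremum over λ ∈ [λ₀,λ₁], x ∈ ℝ and 0 ≤ j ≤ 4 of |∂ʲ_x F(λ,x)| is finite. Then for every ε̄ > 0 there exist ε ∈ (0, ε̄) and coefficients A₁, B₁, A₂, B₂ ∈ [1,2] such that, setting V(x)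 = ε(A₁ cos x + B₁ sin x + A₂ cos 2x + B₂ sin 2x), for every λ ∈ [λ₀,λ₁] and every x* ∈ ℝ at which F_λ − V attains its global minimum, one has (F_λ − V)''(x*) > 0; that is, every global minimum of F_λ − V is non-degenerate, simultaneously for all λ in the interval. -/
open Set Real

lemma aux_taylor (f : ℝ → ℝ) (hf : ContDiff ℝ 4 f) (M : ℝ)
    (hM : ∀ x, |iteratedDeriv 4 f x| ≤ M) (x t : ℝ) :
    |f (x + t) - f x - iteratedDeriv 1 f x * t - iteratedDeriv 2 f x * t ^ 2 / 2
      - iteratedDeriv 3 f x * t ^ 3 / 6| ≤ M * t ^ 4 / 24 := by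
  rcases eq_or_ne t 0 with rfl | ht
  · simp
  have hx : x ≠ x + t := by simpa using ht
  obtain ⟨y, -, hy⟩ := taylor_mean_remainder_lagrange_iteratedDeriv (n := 3) hx
    (by exact_mod_cast hf.contDiffOn)
  have hmem : x ∈ uIcc x (x + t) := left_mem_uIcc
  have key : ∀ k : ℕ, k ≤ 4 → iteratedDerivWithin k f (uIcc x (x + t)) x = iteratedDeriv k f x := by
    intro k hk
    exact iteratedDerivWithin_eq_iteratedDeriv (uniqueDiffOn_uIcc hx)
      ((hf.of_le (by exact_mod_cast hk)).contDiffAt) hmem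
  rw [taylor_within_apply] at hy
  simp only [Finset.sum_range_succ, Finset.sum_range_zero, key 0 (by norm_num), key 1 (by norm_num),
    key 2 (by norm_num), key 3 (by norm_num)] at hy
  norm_num [Nat.factorial] at hy
  have e : f (x + t) - f x - iteratedDeriv 1 f x * t - iteratedDeriv 2 f x * t ^ 2 / 2
      - iteratedDeriv 3 f x * t ^ 3 / 6 = iteratedDeriv 4 f y * t ^ 4 / 24 := by
    rw [iteratedDeriv_one]
    linarith
  rw [e, abs_div, abs_mul, abs_of_nonneg (by positivity : (0:ℝ) ≤ t ^ 4)]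
  norm_num
  have := mul_le_mul_of_nonneg_right (hM y) (by positivity : (0:ℝ) ≤ t ^ 4)
  linarith

lemma aux_poly (a b c M : ℝ) (hM : 0 ≤ M) (hb : b ≤ 0) (ha : a = 0)
    (h : ∀ t : ℝ, 0 ≤ a * t + b * t ^ 2 + c * t ^ 3 + M * t ^ 4) : b = 0 ∧ c = 0 := by
  subst ha
  have hb0 : b = 0 := by
    by_contra hne
    have hb' : b < 0 := lt_of_le_of_ne hb hne
    have hlt : ∀ t : ℝ, 0 < t → 0 ≤ b + M * t ^ 2 := by
      intro t ht
      have h1 := h t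
      have h2 := h (-t)
      have : 0 ≤ t ^ 2 * (b + M * t ^ 2) := by nlinarith
      exact nonneg_of_mul_nonneg_right this (by positivity)
    have hpos : 0 < -b / (2 * (M + 1)) := by apply div_pos <;> linarith
    have := hlt (Real.sqrt (-b / (2 * (M + 1)))) (Real.sqrt_pos.mpr hpos)
    rw [Real.sq_sqrt hpos.le] at this
    have e : -b / (2 * (M + 1)) * (2 * (M + 1)) = -b := by field_simp
    nlinarith
  refine ⟨hb0, ?_⟩
  subst hb0
  have hlt : ∀ t : ℝ, 0 < t → |c| ≤ M * t := by
    intro t ht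
    have h1 := h t
    have h2 := h (-t)
    have ht3 : 0 < t ^ 3 := by positivity
    rw [abs_le]
    constructor
    · have : 0 ≤ t ^ 3 * (c + M * t) := by nlinarith
      have := nonneg_of_mul_nonneg_right this ht3
      linarith
    · have : 0 ≤ t ^ 3 * (M * t - c) := by nlinarith
      have := nonneg_of_mul_nonneg_right this ht3
      linarith
  by_contra hc
  have hc' : 0 < |c| := abs_pos.mpr hc
  have := hlt (|c| / (2 * (M + 1))) (by positivity)
  have e : |c| / (2 * (M + 1)) * (2 * (M + 1)) = |c| := by field_simp
  have : 0 < |c| / (2 * (M + 1)) := by positivity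
  nlinarith

/-- A degenerate global minimum is flat to fourth order. -/
lemma aux_flat (f : ℝ → ℝ) (hf : ContDiff ℝ 4 f) (M : ℝ)
    (hM : ∀ x, |iteratedDeriv 4 f x| ≤ M) (y : ℝ) (hmin : ∀ x, f y ≤ f x)
    (hd : ¬ 0 < iteratedDeriv 2 f y) (t : ℝ) : |f (y + t) - f y| ≤ M * t ^ 4 / 24 := by
  have hM0 : 0 ≤ M := (abs_nonneg _).trans (hM 0)
  have h1 : iteratedDeriv 1 f y = 0 := by
    rw [iteratedDeriv_one]
    exact IsLocalMin.deriv_eq_zero (Filter.Eventually.of_forall hmin)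
  obtain ⟨h2, h3⟩ := aux_poly (iteratedDeriv 1 f y) (iteratedDeriv 2 f y / 2)
    (iteratedDeriv 3 f y / 6) (M / 24) (by positivity) (by linarith) h1 (by
      intro s
      have := (abs_le.mp (aux_taylor f hf M hM y s)).2
      have := hmin (y + s)
      linarith)
  have h2' : iteratedDeriv 2 f y = 0 := by linarith
  have h3' : iteratedDeriv 3 f y = 0 := by linarith
  have := aux_taylor f hf M hM y t
  rw [h1, h2', h3'] at this
  simpa using this

lemma aux_interp (f : ℝ → ℝ) (hf : ContDiff ℝ 4 f) (M a q h : ℝ) (hh : 0 < h)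
    (hM : ∀ x, |iteratedDeriv 4 f x| ≤ M) (y : ℝ)
    (hq : ∀ t, |t| ≤ 2 * h → |f (y + t) - q| ≤ a * h ^ 4) :
    |iteratedDeriv 1 f y| ≤ 10 * (a + M) * h ^ 3 ∧ |iteratedDeriv 2 f y| ≤ 10 * (a + M) * h ^ 2 ∧
    |iteratedDeriv 3 f y| ≤ 10 * (a + M) * h := by
  have hM0 : 0 ≤ M := (abs_nonneg _).trans (hM 0)
  have h4 : 0 < h ^ 4 := by positivity
  have hMh : 0 ≤ M * h ^ 4 := by positivity
  have q0 := hq 0 (by simp; positivity)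
  have ha : 0 ≤ a * h ^ 4 := (abs_nonneg _).trans q0
  have q1 := hq h (by rw [abs_of_pos hh]; linarith)
  have q2 := hq (-h) (by rw [abs_neg, abs_of_pos hh]; linarith)
  have q3 := hq (2 * h) (by rw [abs_of_pos (by positivity)])
  have q4 := hq (-(2 * h)) (by rw [abs_neg, abs_of_pos (by positivity)])
  have t1 := aux_taylor f hf M hM y h
  have t2 := aux_taylor f hf M hM y (-h)
  have t3 := aux_taylor f hf M hM y (2 * h)
  have t4 := aux_taylor f hf M hM y (-(2 * h))
  rw [add_zero] at q0
  ring_nf at q0 q1 q2 q3 q4 t1 t2 t3 t4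
  rw [abs_le] at q0 q1 q2 q3 q4 t1 t2 t3 t4
  obtain ⟨_, _⟩ := q0
  obtain ⟨_, _⟩ := q1
  obtain ⟨_, _⟩ := q2
  obtain ⟨_, _⟩ := q3
  obtain ⟨_, _⟩ := q4
  obtain ⟨_, _⟩ := t1
  obtain ⟨_, _⟩ := t2
  obtain ⟨_, _⟩ := t3
  obtain ⟨_, _⟩ := t4
  ring_nf at *
  refine ⟨?_, ?_, ?_⟩
  · refine le_of_mul_le_mul_right ?_ hh
    rw [← abs_of_pos hh, ← abs_mul, abs_of_pos hh, abs_le]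
    constructor <;> linarith
  · refine le_of_mul_le_mul_right ?_ (pow_pos hh 2)
    rw [← abs_of_pos (pow_pos hh 2), ← abs_mul, abs_of_pos (pow_pos hh 2), abs_le]
    constructor <;> linarith
  · refine le_of_mul_le_mul_right ?_ (pow_pos hh 3)
    rw [← abs_of_pos (pow_pos hh 3), ← abs_mul, abs_of_pos (pow_pos hh 3), abs_le]
    constructor <;> linarith

/-- the perturbation and its derivatives -/
noncomputable def auxV (a b c d x : ℝ) : ℝ :=
  a * cos x + b * sin x + c * cos (2 * x) + d * sin (2 * x)

lemma auxV_deriv (a b c d : ℝ) : deriv (auxV a b c d) = auxV b (-a) (2 * d) (-(2 * c)) := by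
  funext x
  have h2 : HasDerivAt (fun x : ℝ => 2 * x) 2 x := by simpa using (hasDerivAt_id x).const_mul 2
  have := ((((hasDerivAt_cos x).const_mul a).add ((hasDerivAt_sin x).const_mul b)).add
    ((h2.cos).const_mul c)).add ((h2.sin).const_mul d)
  have e : deriv (auxV a b c d) x = _ := this.deriv
  rw [e, auxV]
  ring

lemma auxV_contDiff (a b c d : ℝ) (n : ℕ∞) : ContDiff ℝ n (auxV a b c d) := by
  unfold auxV
  fun_prop

lemma auxV_iter (a b c d : ℝ) :
    iteratedDeriv 1 (auxV a b c d) = auxV b (-a) (2 * d) (-(2 * c)) ∧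
    iteratedDeriv 2 (auxV a b c d) = auxV (-a) (-b) (-(4 * c)) (-(4 * d)) ∧
    iteratedDeriv 3 (auxV a b c d) = auxV (-b) a (-(8 * d)) (8 * c) ∧
    iteratedDeriv 4 (auxV a b c d) = auxV a b (16 * c) (16 * d) := by
  have h1 : iteratedDeriv 1 (auxV a b c d) = auxV b (-a) (2 * d) (-(2 * c)) := by
    rw [iteratedDeriv_one, auxV_deriv]
  have h2 : iteratedDeriv 2 (auxV a b c d) = auxV (-a) (-b) (-(4 * c)) (-(4 * d)) := by
    rw [iteratedDeriv_succ, h1, auxV_deriv]; congr 1 <;> ring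
  have h3 : iteratedDeriv 3 (auxV a b c d) = auxV (-b) a (-(8 * d)) (8 * c) := by
    rw [iteratedDeriv_succ, h2, auxV_deriv]; congr 1 <;> ring
  have h4 : iteratedDeriv 4 (auxV a b c d) = auxV a b (16 * c) (16 * d) := by
    rw [iteratedDeriv_succ, h3, auxV_deriv]; congr 1 <;> ring
  exact ⟨h1, h2, h3, h4⟩

lemma auxG_contDiff (f : ℝ → ℝ) (hf : ContDiff ℝ 4 f) (ε a b c d : ℝ) :
    ContDiff ℝ 4 (fun x => f x - ε * auxV a b c d x) := by
  have := auxV_contDiff a b c d 4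
  exact hf.sub (contDiff_const.mul (by exact_mod_cast this))

lemma auxG_iter (f : ℝ → ℝ) (hf : ContDiff ℝ 4 f) (ε a b c d x : ℝ) (k : ℕ) (hk : k ≤ 4) :
    iteratedDeriv k (fun x => f x - ε * auxV a b c d x) x =
      iteratedDeriv k f x - ε * iteratedDeriv k (auxV a b c d) x := by
  have hV := auxV_contDiff a b c d k
  have hf' : ContDiff ℝ k f := hf.of_le (by exact_mod_cast hk)
  have hV' : ContDiff ℝ k (auxV a b c d) := by exact_mod_cast hV
  rw [iteratedDeriv_fun_sub hf'.contDiffAt (contDiff_const.mul hV').contDiffAt,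
    iteratedDeriv_const_mul_field]

lemma auxG_bound (f : ℝ → ℝ) (hf : ContDiff ℝ 4 f) (K ε : ℝ) (hε : 0 ≤ ε)
    (hK : ∀ x, |iteratedDeriv 4 f x| ≤ K) (a b c d : ℝ) (ha : a ∈ Icc (1:ℝ) 2)
    (hb : b ∈ Icc (1:ℝ) 2) (hc : c ∈ Icc (1:ℝ) 2) (hd : d ∈ Icc (1:ℝ) 2) (x : ℝ) :
    |iteratedDeriv 4 (fun x => f x - ε * auxV a b c d x) x| ≤ K + ε * 68 := by
  rw [auxG_iter f hf _ _ _ _ _ _ _ le_rfl, (auxV_iter a b c d).2.2.2]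
  have key : ∀ u v w : ℝ, 0 ≤ u → u ≤ w → |v| ≤ 1 → |u * v| ≤ w := by
    intro u v w hu huw hv
    rw [abs_mul, abs_of_nonneg hu]
    nlinarith [abs_nonneg v]
  have hV : |auxV a b (16 * c) (16 * d) x| ≤ 68 := by
    unfold auxV
    have h1 := key a (cos x) 2 (by linarith [ha.1]) ha.2 (abs_cos_le_one _)
    have h2 := key b (sin x) 2 (by linarith [hb.1]) hb.2 (abs_sin_le_one _)
    have h3 := key (16 * c) (cos (2 * x)) 32 (by linarith [hc.1]) (by linarith [hc.2])
      (abs_cos_le_one _)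
    have h4 := key (16 * d) (sin (2 * x)) 32 (by linarith [hd.1]) (by linarith [hd.2])
      (abs_sin_le_one _)
    rw [abs_le] at *
    constructor <;> linarith [h1.1, h1.2, h2.1, h2.2, h3.1, h3.2, h4.1, h4.2]
  have h2 : |ε * auxV a b (16 * c) (16 * d) x| ≤ ε * 68 := by
    rw [abs_mul, abs_of_nonneg hε]
    exact mul_le_mul_of_nonneg_left hV hε
  have := hK x
  exact (abs_sub _ _).trans (by linarith)

lemma aux_grid (s : ℝ) (h0 : 0 ≤ s) (h1 : s ≤ 1) (N : ℕ) (hN : 0 < N) :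
    ∃ k ∈ Finset.range (N + 1), |s - k / N| ≤ 1 / N := by
  have hN' : (0:ℝ) < N := by exact_mod_cast hN
  refine ⟨⌊s * N⌋₊, ?_, ?_⟩
  · rw [Finset.mem_range, Nat.lt_succ_iff]
    apply Nat.floor_le_of_le
    nlinarith
  · have ha := Nat.floor_le (by positivity : 0 ≤ s * N)
    have hb := Nat.lt_floor_add_one (s * N)
    have e : s - (⌊s * N⌋₊ : ℝ) / N = (s * N - ⌊s * N⌋₊) / N := by field_simp
    rw [e, abs_of_nonneg (div_nonneg (by linarith) hN'.le)]
    gcongr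
    linarith

open MeasureTheory in
lemma aux_measure (x m₁ m₂ m₃ r h : ℝ) (hr : 0 ≤ r) (hh : 0 ≤ h) :
    volume {v : Fin 4 → ℝ | (v ∈ Icc (fun _ => (1:ℝ)) (fun _ => 2)) ∧
      |m₁ - iteratedDeriv 1 (auxV (v 0) (v 1) (v 2) (v 3)) x| ≤ r * h ^ 3 ∧
      |m₂ - iteratedDeriv 2 (auxV (v 0) (v 1) (v 2) (v 3)) x| ≤ r * h ^ 2 ∧
      |m₃ - iteratedDeriv 3 (auxV (v 0) (v 1) (v 2) (v 3)) x| ≤ r * h} ≤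
    ENNReal.ofReal (64 * r ^ 3 * h ^ 6) := by
  set A : Matrix (Fin 4) (Fin 4) ℝ :=
    !![-sin x, cos x, -2 * sin (2 * x), 2 * cos (2 * x);
       -cos x, -sin x, -4 * cos (2 * x), -4 * sin (2 * x);
       sin x, -cos x, 8 * sin (2 * x), -8 * cos (2 * x);
       0, 0, cos (2 * x), sin (2 * x)] with hA
  have hdet : A.det = 6 ∨ A.det = -6 := by
    have h1 := sin_sq_add_cos_sq x
    have h2 := sin_sq_add_cos_sq (2 * x)
    generalize sin (2 * x) = S at *
    generalize cos (2 * x) = C at *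
    generalize sin x = s at *
    generalize cos x = c at *
    have : A.det = 6 * ((s ^ 2 + c ^ 2) * (S ^ 2 + C ^ 2)) ∨
        A.det = -6 * ((s ^ 2 + c ^ 2) * (S ^ 2 + C ^ 2)) := by
      rw [hA]
      simp [Matrix.det_succ_row_zero, Fin.sum_univ_succ, Fin.succAbove]
      left
      ring1
    rw [h1, h2] at this
    simpa using this
  have hdet0 : LinearMap.det (Matrix.toLin' A) ≠ 0 := by
    rw [LinearMap.det_toLin']
    rcases hdet with h | h <;> rw [h] <;> norm_num
  have habs : |(LinearMap.det (Matrix.toLin' A))⁻¹| ≤ 1 := by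
    rw [LinearMap.det_toLin']
    rcases hdet with h | h <;> rw [h] <;> norm_num [abs_of_pos, abs_of_neg]
  calc _ ≤ volume ((Matrix.toLin' A) ⁻¹' Icc ![m₁ - r * h ^ 3, m₂ - r * h ^ 2, m₃ - r * h, -4]
        ![m₁ + r * h ^ 3, m₂ + r * h ^ 2, m₃ + r * h, 4]) := by
        apply measure_mono
        rintro v ⟨⟨hv1, hv2⟩, h1, h2, h3⟩
        obtain ⟨e1, e2, e3, -⟩ := auxV_iter (v 0) (v 1) (v 2) (v 3)
        rw [e1, auxV, abs_le] at h1
        rw [e2, auxV, abs_le] at h2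
        rw [e3, auxV, abs_le] at h3
        have a2 := hv1 2
        have b2 := hv2 2
        have a3 := hv1 3
        have b3 := hv2 3
        simp only at a2 b2 a3 b3
        have c1 := neg_one_le_cos (2 * x)
        have c2 := cos_le_one (2 * x)
        have c3 := neg_one_le_sin (2 * x)
        have c4 := sin_le_one (2 * x)
        rw [mem_preimage, mem_Icc, Pi.le_def, Pi.le_def, Fin.forall_fin_succ, Fin.forall_fin_succ,
          Fin.forall_fin_succ, Fin.forall_fin_succ, Fin.forall_fin_succ, Fin.forall_fin_succ,
          Fin.forall_fin_succ, Fin.forall_fin_succ]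
        simp [hA, Matrix.mulVec, dotProduct, Fin.sum_univ_succ]
        refine ⟨⟨?_, ?_, ?_, ?_⟩, ?_, ?_, ?_, ?_⟩
        all_goals first | linarith [h1.1, h1.2, h2.1, h2.2, h3.1, h3.2] | nlinarith
    _ = ENNReal.ofReal |(LinearMap.det (Matrix.toLin' A))⁻¹| * _ :=
        Measure.addHaar_preimage_linearMap volume hdet0 _
    _ ≤ 1 * ENNReal.ofReal (64 * r ^ 3 * h ^ 6) := by
        gcongr
        · rw [← ENNReal.ofReal_one]; exact ENNReal.ofReal_le_ofReal habs
        · rw [Real.volume_Icc_pi, ← ENNReal.ofReal_prod_of_nonneg]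
          · apply ENNReal.ofReal_le_ofReal
            apply le_of_eq
            simp [Fin.prod_univ_succ]
            ring
          · intro i _
            fin_cases i <;> simp <;> nlinarith [mul_nonneg hr hh, mul_nonneg hr (pow_nonneg hh 2), mul_nonneg hr (pow_nonneg hh 3)]
    _ = _ := one_mul _

/-- A degenerate minimum near a grid point forces the jet at the grid point to be small. -/
lemma aux_core (f g : ℝ → ℝ) (hf : ContDiff ℝ 4 f) (hg : ContDiff ℝ 4 g) (K ε D h : ℝ)
    (hε : 0 < ε) (hh : 0 < h)
    (hKf : ∀ x, |iteratedDeriv 4 f x| ≤ K) (hKg : ∀ x, |iteratedDeriv 4 g x| ≤ K)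
    (hfg : ∀ x, |g x - f x| ≤ D * h ^ 4)
    (a b c d : ℝ) (ha : a ∈ Icc (1:ℝ) 2)
    (hb : b ∈ Icc (1:ℝ) 2) (hc : c ∈ Icc (1:ℝ) 2) (hd : d ∈ Icc (1:ℝ) 2) (y z : ℝ)
    (hyz : |y - z| ≤ 7 * h)
    (hmin : ∀ x, f y - ε * auxV a b c d y ≤ f x - ε * auxV a b c d x)
    (hdeg : ¬ 0 < iteratedDeriv 2 (fun x => f x - ε * auxV a b c d x) y) (r : ℝ)
    (hr : r = 10 * ((K + ε * 68) * 9 ^ 4 / 24 + D + (K + ε * 68)) / ε) :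
    |iteratedDeriv 1 g z / ε - iteratedDeriv 1 (auxV a b c d) z| ≤ r * h ^ 3 ∧
    |iteratedDeriv 2 g z / ε - iteratedDeriv 2 (auxV a b c d) z| ≤ r * h ^ 2 ∧
    |iteratedDeriv 3 g z / ε - iteratedDeriv 3 (auxV a b c d) z| ≤ r * h := by
  have hMf := auxG_bound f hf K ε hε.le hKf a b c d ha hb hc hd
  have hMg := auxG_bound g hg K ε hε.le hKg a b c d ha hb hc hd
  have hM0 : 0 ≤ K + ε * 68 := (abs_nonneg _).trans (hMf 0)
  have flat := aux_flat _ (auxG_contDiff f hf ε a b c d) _ hMf y hmin hdeg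
  obtain ⟨i1, i2, i3⟩ := aux_interp _ (auxG_contDiff g hg ε a b c d) (K + ε * 68)
    ((K + ε * 68) * 9 ^ 4 / 24 + D) (f y - ε * auxV a b c d y) h hh hMg z (by
      intro t ht
      have h1 := flat (z + t - y)
      have h2 := hfg (z + t)
      have e : y + (z + t - y) = z + t := by ring
      simp only [e] at h1
      have h3 : |z + t - y| ≤ 9 * h := by
        rw [abs_le] at *
        constructor <;> linarith [hyz.1, hyz.2, ht.1, ht.2]
      have h4 : (z + t - y) ^ 4 ≤ (9 * h) ^ 4 := by
        rw [← Even.pow_abs (by decide : Even 4) (z + t - y)]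
        exact pow_le_pow_left₀ (abs_nonneg _) h3 4
      have h5 := mul_le_mul_of_nonneg_left h4 hM0
      rw [mul_pow] at h5
      rw [abs_le] at *
      constructor <;> linarith [h1.1, h1.2, h2.1, h2.2])
  rw [auxG_iter g hg _ _ _ _ _ _ _ (by norm_num)] at i1 i2 i3
  have key : ∀ u v w p : ℝ, |u - ε * v| ≤ w * p → |u / ε - v| ≤ w / ε * p := by
    intro u v w p hu
    have e : u / ε - v = (u - ε * v) / ε := by field_simp
    rw [e, abs_div, abs_of_pos hε, div_mul_eq_mul_div]
    gcongr
  rw [hr]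
  exact ⟨key _ _ _ _ i1, key _ _ _ _ i2, key _ _ _ _ i3⟩



/-- Density part of Theorem B.1 of the paper: for a Lipschitz family of C⁴ 2π-periodic
functions, an arbitrarily small degree-two trigonometric perturbation makes every global
minimum non-degenerate simultaneously for all parameters. -/
theorem stmt_3 (lam₀ lam₁ : ℝ) (hlam : lam₀ < lam₁) (F : ℝ → ℝ → ℝ)
    (hsmooth : ∀ lam ∈ Icc lam₀ lam₁, ContDiff ℝ 4 (F lam))
    (hper : ∀ lam ∈ Icc lam₀ lam₁, ∀ x : ℝ, F lam (x + 2 * π) = F lam x)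
    (hLip : ∃ C : ℝ, ∀ x : ℝ, ∀ lam ∈ Icc lam₀ lam₁, ∀ lam' ∈ Icc lam₀ lam₁,
      |F lam x - F lam' x| ≤ C * |lam - lam'|)
    (hbnd : ∃ K : ℝ, ∀ lam ∈ Icc lam₀ lam₁, ∀ x : ℝ, ∀ j : ℕ, j ≤ 4 →
      |iteratedDeriv j (F lam) x| ≤ K) :
    ∀ εbar : ℝ, 0 < εbar → ∃ ε : ℝ, 0 < ε ∧ ε < εbar ∧
      ∃ A₁ ∈ Icc (1:ℝ) 2, ∃ B₁ ∈ Icc (1:ℝ) 2, ∃ A₂ ∈ Icc (1:ℝ) 2, ∃ B₂ ∈ Icc (1:ℝ) 2,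
        ∀ lam ∈ Icc lam₀ lam₁, ∀ xstar : ℝ,
          (∀ x : ℝ,
            F lam xstar - ε * (A₁ * cos xstar + B₁ * sin xstar +
              A₂ * cos (2 * xstar) + B₂ * sin (2 * xstar)) ≤
            F lam x - ε * (A₁ * cos x + B₁ * sin x +
              A₂ * cos (2 * x) + B₂ * sin (2 * x))) →
          0 < iteratedDeriv 2
            (fun x => F lam x - ε * (A₁ * cos x + B₁ * sin x +
              A₂ * cos (2 * x) + B₂ * sin (2 * x))) xstar := by
  intro εbar hεbar
  obtain ⟨C, hC⟩ := hLip
  obtain ⟨K, hK⟩ := hbnd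
  set ε := εbar / 2 with hεdef
  have hε : 0 < ε := by positivity
  refine ⟨ε, hε, by linarith, ?_⟩
  set L := lam₁ - lam₀ with hL
  have hL0 : 0 < L := by rw [hL]; linarith
  have hK0 : 0 ≤ K := (abs_nonneg _).trans (hK lam₀ ⟨le_rfl, hlam.le⟩ 0 0 (by norm_num))
  set D := |C| * L with hD
  have hD0 : 0 ≤ D := by positivity
  set r := 10 * ((K + ε * 68) * 9 ^ 4 / 24 + D + (K + ε * 68)) / ε with hr
  have hr0 : 0 ≤ r := by positivity
  obtain ⟨n, hn⟩ := exists_nat_gt (256 * r ^ 3)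
  have hn0' : (0:ℝ) < n := lt_of_le_of_lt (by positivity) hn
  have hn0 : 0 < n := by exact_mod_cast hn0'
  have hn1 : (1:ℝ) ≤ n := by exact_mod_cast hn0
  set h : ℝ := 1 / n with hh
  have hh0 : 0 < h := by positivity
  set lk : ℕ → ℝ := fun k => lam₀ + L * (k / ((n ^ 4 : ℕ) : ℝ)) with hlk
  set xl : ℕ → ℝ := fun l => 2 * π * (l / n) with hxl
  set bad : ℕ → ℕ → Set (Fin 4 → ℝ) := fun k l =>
    {v : Fin 4 → ℝ | (v ∈ Icc (fun _ => (1:ℝ)) (fun _ => 2)) ∧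
      |iteratedDeriv 1 (F (lk k)) (xl l) / ε -
        iteratedDeriv 1 (auxV (v 0) (v 1) (v 2) (v 3)) (xl l)| ≤ r * h ^ 3 ∧
      |iteratedDeriv 2 (F (lk k)) (xl l) / ε -
        iteratedDeriv 2 (auxV (v 0) (v 1) (v 2) (v 3)) (xl l)| ≤ r * h ^ 2 ∧
      |iteratedDeriv 3 (F (lk k)) (xl l) / ε -
        iteratedDeriv 3 (auxV (v 0) (v 1) (v 2) (v 3)) (xl l)| ≤ r * h} with hbad
  obtain ⟨v, hv, hvb⟩ : ∃ v ∈ Icc (fun _ : Fin 4 => (1:ℝ)) (fun _ => 2),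
      v ∉ ⋃ k ∈ Finset.range (n ^ 4 + 1), ⋃ l ∈ Finset.range (n + 1), bad k l := by
    by_contra hcon
    push Not at hcon
    have h1 : MeasureTheory.volume (Icc (fun _ : Fin 4 => (1:ℝ)) (fun _ => 2)) = 1 := by
      rw [Real.volume_Icc_pi]; norm_num
    have h2 : MeasureTheory.volume (⋃ k ∈ Finset.range (n ^ 4 + 1),
        ⋃ l ∈ Finset.range (n + 1), bad k l) ≤
        ENNReal.ofReal (((n ^ 4 + 1 : ℕ) : ℝ) * (((n + 1 : ℕ) : ℝ) * (64 * r ^ 3 * h ^ 6))) := by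
      calc _ ≤ ∑ k ∈ Finset.range (n ^ 4 + 1), ∑ l ∈ Finset.range (n + 1),
              ENNReal.ofReal (64 * r ^ 3 * h ^ 6) := by
            refine (MeasureTheory.measure_biUnion_finset_le _ _).trans ?_
            refine Finset.sum_le_sum fun k _ => ?_
            refine (MeasureTheory.measure_biUnion_finset_le _ _).trans ?_
            exact Finset.sum_le_sum fun l _ => aux_measure _ _ _ _ _ _ hr0 hh0.le
        _ = _ := by
            simp only [Finset.sum_const, Finset.card_range, nsmul_eq_mul]
            generalize hw : 64 * r ^ 3 * h ^ 6 = w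
            rw [ENNReal.ofReal_mul (by positivity), ENNReal.ofReal_mul (by positivity),
              ENNReal.ofReal_natCast, ENNReal.ofReal_natCast]
    have h3 := MeasureTheory.measure_mono (μ := MeasureTheory.volume) hcon
    have h4 : (1:ENNReal) < 1 := by
      calc (1:ENNReal) ≤ _ := h1 ▸ h3.trans h2
        _ < ENNReal.ofReal 1 := by
          rw [ENNReal.ofReal_lt_ofReal_iff one_pos]
          push_cast
          have hn4 : (n:ℝ) ^ 4 + 1 ≤ 2 * n ^ 4 := by linarith [one_le_pow₀ hn1 (n := 4)]
          have hn5 : (n:ℝ) + 1 ≤ 2 * n := by linarith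
          calc ((n:ℝ) ^ 4 + 1) * ((n + 1) * (64 * r ^ 3 * h ^ 6))
              ≤ (2 * n ^ 4) * ((2 * n) * (64 * r ^ 3 * h ^ 6)) := by gcongr
            _ = 256 * r ^ 3 / n := by rw [hh]; field_simp; ring
            _ < 1 := by rw [div_lt_one hn0']; exact hn
        _ = 1 := ENNReal.ofReal_one
    exact lt_irrefl _ h4
  have hvI : ∀ i, v i ∈ Icc (1:ℝ) 2 := fun i => ⟨hv.1 i, hv.2 i⟩
  refine ⟨v 0, hvI 0, v 1, hvI 1, v 2, hvI 2, v 3, hvI 3, ?_⟩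
  intro lam hlamI xstar hmin
  by_contra hdeg
  change ¬ 0 < iteratedDeriv 2 (fun x => F lam x - ε * auxV (v 0) (v 1) (v 2) (v 3) x) xstar at hdeg
  change ∀ x, F lam xstar - ε * auxV (v 0) (v 1) (v 2) (v 3) xstar ≤
    F lam x - ε * auxV (v 0) (v 1) (v 2) (v 3) x at hmin
  -- reduce to one period
  set G := fun x => F lam x - ε * auxV (v 0) (v 1) (v 2) (v 3) x with hG
  have hGper : Function.Periodic G (2 * π) := by
    intro x
    have e : 2 * (x + 2 * π) = 2 * x + 2 * π + 2 * π := by ring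
    simp only [hG, auxV, hper lam hlamI, cos_add_two_pi, sin_add_two_pi, e]
  obtain ⟨y, hy, hxy⟩ : ∃ y ∈ Ico 0 (0 + 2 * π), ∃ m : ℤ, xstar = y + m * (2 * π) :=
    ⟨toIcoMod two_pi_pos 0 xstar, toIcoMod_mem_Ico _ _ _, toIcoDiv two_pi_pos 0 xstar, by
      have := toIcoMod_add_toIcoDiv_zsmul two_pi_pos 0 xstar
      rw [zsmul_eq_mul] at this
      exact this.symm⟩
  obtain ⟨m, rfl⟩ := hxy
  have hshift : (fun z => G (z + m * (2 * π))) = G := by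
    funext z
    exact hGper.int_mul m z
  have hdeg' : ¬ 0 < iteratedDeriv 2 G y := by
    have := congrFun (iteratedDeriv_comp_add_const 2 G (m * (2 * π))) y
    rw [hshift] at this
    rw [this]
    exact hdeg
  have hmin' : ∀ x, G y ≤ G x := by
    intro x
    rw [← congrFun hshift y]
    exact hmin x
  rw [zero_add] at hy
  obtain ⟨k, hk, hks⟩ := aux_grid ((lam - lam₀) / L) (div_nonneg (by linarith [hlamI.1]) hL0.le)
    (by rw [div_le_one hL0]; linarith [hlamI.2]) (n ^ 4) (by positivity)
  obtain ⟨l, hl, hls⟩ := aux_grid (y / (2 * π)) (div_nonneg hy.1 two_pi_pos.le)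
    (by rw [div_le_one two_pi_pos]; exact hy.2.le) n hn0
  apply hvb
  simp only [mem_iUnion]
  refine ⟨k, hk, l, hl, hv, ?_⟩
  have hN4 : (0:ℝ) < ((n ^ 4 : ℕ) : ℝ) := by exact_mod_cast (by positivity : 0 < n ^ 4)
  have hlkI : lk k ∈ Icc lam₀ lam₁ := by
    have h0 : 0 ≤ (k:ℝ) / ((n ^ 4 : ℕ) : ℝ) := by positivity
    have h1 : (k:ℝ) / ((n ^ 4 : ℕ) : ℝ) ≤ 1 := by
      rw [div_le_one hN4]
      exact_mod_cast Nat.lt_succ_iff.mp (Finset.mem_range.mp hk)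
    constructor
    · have := mul_nonneg hL0.le h0
      simp only [hlk]; linarith
    · have := mul_le_mul_of_nonneg_left h1 hL0.le
      simp only [hlk]; linarith
  have hdist : |lk k - lam| ≤ L * h ^ 4 := by
    have e : lk k - lam = -(L * ((lam - lam₀) / L - k / ((n ^ 4 : ℕ) : ℝ))) := by
      simp only [hlk]; field_simp; ring
    rw [e, abs_neg, abs_mul, abs_of_pos hL0]
    refine mul_le_mul_of_nonneg_left (hks.trans (le_of_eq ?_)) hL0.le
    rw [hh]; push_cast; rw [div_pow, one_pow]
  have hyd : |y - xl l| ≤ 7 * h := by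
    have e : y - xl l = (2 * π) * (y / (2 * π) - l / n) := by
      simp only [hxl]; have := pi_pos; field_simp
    rw [e, abs_mul, abs_of_pos two_pi_pos]
    have : 2 * π ≤ 7 := by linarith [pi_lt_d2]
    exact mul_le_mul this hls (abs_nonneg _) (by norm_num)
  refine aux_core (F lam) (F (lk k)) (hsmooth _ hlamI) (hsmooth _ hlkI) K ε D h hε hh0
    (fun x => hK _ hlamI x 4 le_rfl) (fun x => hK _ hlkI x 4 le_rfl) ?_ _ _ _ _
    (hvI 0) (hvI 1) (hvI 2) (hvI 3) y (xl l) hyd hmin' hdeg' r hr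
  intro x
  calc _ ≤ C * |lk k - lam| := hC x _ hlkI _ hlamI
    _ ≤ |C| * |lk k - lam| := by gcongr; exact le_abs_self C
    _ ≤ |C| * (L * h ^ 4) := by gcongr
    _ = D * h ^ 4 := by rw [hD]; ring
end

section
/- For all real numbers a, b, c and every d > 0, the cubic polynomial p(x) = a·x + b·x² + c·x³ satisfies sup_{x ∈ [−d,d]} p(x) − inf_{x ∈ [−d,d]} p(x) ≥ max{ |a|·d/4, |b|·d², |c|·d³/2 }. -/
/-- Oscillation lower bound for a cubic polynomial p(x) = a·x + b·x² + c·x³ on the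
symmetric interval [−d, d] (the key quantitative step of Appendix B of the paper). -/
theorem stmt_4 (a b c d : ℝ) (hd : 0 < d) :
    max (|a| * d / 4) (max (|b| * d ^ 2) (|c| * d ^ 3 / 2)) ≤
      sSup ((fun x => a * x + b * x ^ 2 + c * x ^ 3) '' Set.Icc (-d) d) -
        sInf ((fun x => a * x + b * x ^ 2 + c * x ^ 3) '' Set.Icc (-d) d) := by
  have hc : IsCompact ((fun x => a * x + b * x ^ 2 + c * x ^ 3) '' Set.Icc (-d) d) :=
    isCompact_Icc.image (by fun_prop)
  have key : ∀ x ∈ Set.Icc (-d) d, ∀ y ∈ Set.Icc (-d) d,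
      (a * x + b * x ^ 2 + c * x ^ 3) - (a * y + b * y ^ 2 + c * y ^ 3) ≤
      sSup ((fun x => a * x + b * x ^ 2 + c * x ^ 3) '' Set.Icc (-d) d) -
        sInf ((fun x => a * x + b * x ^ 2 + c * x ^ 3) '' Set.Icc (-d) d) := by
    intro x hx y hy
    exact sub_le_sub (le_csSup hc.bddAbove ⟨x, hx, rfl⟩) (csInf_le hc.bddBelow ⟨y, hy, rfl⟩)
  generalize sSup ((fun x => a * x + b * x ^ 2 + c * x ^ 3) '' Set.Icc (-d) d) -
        sInf ((fun x => a * x + b * x ^ 2 + c * x ^ 3) '' Set.Icc (-d) d) = S at key ⊢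
  have m1 : d ∈ Set.Icc (-d) d := ⟨by linarith, by linarith⟩
  have m2 : -d ∈ Set.Icc (-d) d := ⟨by linarith, by linarith⟩
  have m3 : d / 2 ∈ Set.Icc (-d) d := ⟨by linarith, by linarith⟩
  have m4 : -(d / 2) ∈ Set.Icc (-d) d := ⟨by linarith, by linarith⟩
  have m0 : (0 : ℝ) ∈ Set.Icc (-d) d := ⟨by linarith, by linarith⟩
  have h1 := key _ m1 _ m2
  have h2 := key _ m2 _ m1
  have h3 := key _ m3 _ m4
  have h4 := key _ m4 _ m3
  have h5 := key _ m1 _ m0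
  have h6 := key _ m2 _ m0
  have h7 := key _ m0 _ m1
  have h8 := key _ m0 _ m2
  clear key
  ring_nf at h1 h2 h3 h4 h5 h6 h7 h8
  refine max_le ?_ (max_le ?_ ?_)
  · rcases abs_cases a with ⟨h, _⟩ | ⟨h, _⟩ <;> rw [h] <;> ring_nf <;> linarith
  · rcases abs_cases b with ⟨h, _⟩ | ⟨h, _⟩ <;> rw [h] <;> ring_nf <;> linarith
  · rcases abs_cases c with ⟨h, _⟩ | ⟨h, _⟩ <;> rw [h] <;> ring_nf <;> linarith
end

section
/- Let d > 0, M > 0 and x₀ ∈ ℝ, and let f : ℝ → ℝ be four times continuously differentiable on the interval [x₀−d, x₀+d] with sup_{|x−x₀|≤d} |f⁗(x)| < 24M. If f(x) − f(x₀) ≥ M·(x−x₀)⁴ for all x with |x−x₀| ≤ d, then f''(x₀) > 0. -/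
open Set

lemma taylor_aux (d M x₀ x : ℝ) (f : ℝ → ℝ) (hd : 0 < d) (hx : x₀ ≠ x)
    (hf : ContDiffOn ℝ 4 f (Icc (x₀ - d) (x₀ + d)))
    (hmem : x ∈ Icc (x₀ - d) (x₀ + d)) (K : ℝ)
    (hK : ∀ x ∈ Icc (x₀ - d) (x₀ + d),
      |iteratedDerivWithin 4 f (Icc (x₀ - d) (x₀ + d)) x| ≤ K) :
    f x ≤ f x₀ + iteratedDerivWithin 1 f (Icc (x₀ - d) (x₀ + d)) x₀ * (x - x₀)
      + iteratedDerivWithin 2 f (Icc (x₀ - d) (x₀ + d)) x₀ * (x - x₀) ^ 2 / 2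
      + iteratedDerivWithin 3 f (Icc (x₀ - d) (x₀ + d)) x₀ * (x - x₀) ^ 3 / 6
      + K * (x - x₀) ^ 4 / 24 := by
  have hu : UniqueDiffOn ℝ (uIcc x₀ x) := uniqueDiffOn_uIcc hx
  have ht : UniqueDiffOn ℝ (Icc (x₀ - d) (x₀ + d)) := uniqueDiffOn_Icc (by linarith)
  have hsub : uIcc x₀ x ⊆ Icc (x₀ - d) (x₀ + d) :=
    uIcc_subset_Icc ⟨by linarith, by linarith⟩ hmem
  have key : ∀ n : ℕ, n ≤ 4 → ∀ y ∈ uIcc x₀ x, iteratedDerivWithin n f (uIcc x₀ x) y =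
      iteratedDerivWithin n f (Icc (x₀ - d) (x₀ + d)) y := by
    intro n hn y hy
    rw [iteratedDerivWithin_eq_iteratedFDerivWithin, iteratedDerivWithin_eq_iteratedFDerivWithin,
      iteratedFDerivWithin_subset hsub hu ht (hf.of_le (by exact_mod_cast hn)) hy]
  have hf' := hf.mono hsub
  have hdiff : DifferentiableOn ℝ (iteratedDerivWithin 3 f (uIcc x₀ x)) (uIcc x₀ x) :=
    hf'.differentiableOn_iteratedDerivWithin (by norm_cast) hu
  obtain ⟨y, hy, h⟩ := taylor_mean_remainder_lagrange (n := 3) hx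
    (hf'.of_le (by norm_cast)) (hdiff.mono Ioo_subset_Icc_self)
  have hy' : y ∈ uIcc x₀ x := Ioo_subset_Icc_self hy
  have h0 : x₀ ∈ uIcc x₀ x := left_mem_uIcc
  simp only [taylorWithinEval_succ, taylor_within_zero_eval] at h
  norm_num [Nat.factorial] at h
  rw [key 4 (by norm_num) y hy', ← iteratedDerivWithin_one, key 1 (by norm_num) _ h0, key 2 (by norm_num) _ h0,
    key 3 (by norm_num) _ h0] at h
  have hb := mul_le_mul_of_nonneg_right (le_of_abs_le (hK y (hsub hy')))
    (show 0 ≤ (x - x₀) ^ 4 by positivity)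
  linarith

/-- A quartic lower bound f(x) − f(x₀) ≥ M(x−x₀)⁴ on an interval, together with
sup |f⁗| < 24M, forces f''(x₀) > 0 (used in Theorems B.1 and B.4 of the paper). -/
theorem stmt_7 (d M x₀ : ℝ) (hd : 0 < d) (hM : 0 < M) (f : ℝ → ℝ)
    (hf : ContDiffOn ℝ 4 f (Icc (x₀ - d) (x₀ + d)))
    (hf4 : ∃ K : ℝ, K < 24 * M ∧ ∀ x ∈ Icc (x₀ - d) (x₀ + d),
      |iteratedDerivWithin 4 f (Icc (x₀ - d) (x₀ + d)) x| ≤ K)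
    (hquart : ∀ x ∈ Icc (x₀ - d) (x₀ + d), M * (x - x₀) ^ 4 ≤ f x - f x₀) :
    0 < iteratedDerivWithin 2 f (Icc (x₀ - d) (x₀ + d)) x₀ := by
  obtain ⟨K, hKM, hK⟩ := hf4
  have m1 : x₀ + d ∈ Icc (x₀ - d) (x₀ + d) := ⟨by linarith, by linarith⟩
  have m2 : x₀ - d ∈ Icc (x₀ - d) (x₀ + d) := ⟨by linarith, by linarith⟩
  have a1 := taylor_aux d M x₀ (x₀ + d) f hd (by linarith) hf m1 K hK
  have a2 := taylor_aux d M x₀ (x₀ - d) f hd (by linarith) hf m2 K hK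
  have b1 := hquart _ m1
  have b2 := hquart _ m2
  generalize iteratedDerivWithin 2 f (Icc (x₀ - d) (x₀ + d)) x₀ = B at *
  have e1 : x₀ + d - x₀ = d := by ring
  have e2 : x₀ - d - x₀ = -d := by ring
  rw [e1] at a1 b1
  rw [e2] at a2 b2
  have hpos : 0 < (24 * M - K) * d ^ 4 := mul_pos (by linarith) (by positivity)
  have : 0 < B * d ^ 2 := by ring_nf at *; linarith
  exact pos_of_mul_pos_left this (by positivity)
end

section
/- Let n ≥ 1 and let A be a real symmetric positive definite n×n matrix. Then the set of real symmetric positive definite n×n matrices C for which the polynomial λ ↦ det(λ²·A − C) has 2n pairwise distinct roots is open and dense in the set of real symmetric positive definite n×n matrices, endowed with the topology induced from the space of all n×n real matrices. -/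
open scoped Classical

/-- The polynomial λ ↦ det(λ²·A − C), as an element of ℝ[X]. -/
noncomputable def detPencil {n : ℕ} (A C : Matrix (Fin n) (Fin n) ℝ) : Polynomial ℝ :=
  ((Polynomial.X ^ 2 : Polynomial ℝ) • A.map Polynomial.C - C.map Polynomial.C).det

open Polynomial in
theorem detPencil_eq_expand {n : ℕ} (A M : Matrix (Fin n) (Fin n) ℝ) :
    detPencil A M = expand ℝ 2 ((X : ℝ[X]) • A.map C + (-M).map C).det := by
  rw [detPencil, AlgHom.map_det]
  congr 1
  ext1 i j
  simp [sub_eq_add_neg]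

open Polynomial in
theorem detPencil_natDegree {n : ℕ} (A M : Matrix (Fin n) (Fin n) ℝ) (hA : A.det ≠ 0) :
    (detPencil A M).natDegree = 2 * n := by
  rw [detPencil_eq_expand, natDegree_expand, mul_comm]
  congr 1
  refine le_antisymm (by simpa using natDegree_det_X_add_C_le A (-M)) ?_
  apply le_natDegree_of_ne_zero
  have := coeff_det_X_add_C_card A (-M)
  rw [Fintype.card_fin] at this
  rwa [this]

open Polynomial in
theorem good_iff {n : ℕ} (hn : 1 ≤ n) (A M : Matrix (Fin n) (Fin n) ℝ) (hA : A.det ≠ 0) :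
    ((detPencil A M).map (algebraMap ℝ ℂ)).roots.toFinset.card = 2 * n ↔
      (detPencil A M).Separable := by
  have hd := detPencil_natDegree A M hA
  have h0 : detPencil A M ≠ 0 := by
    intro h
    rw [h] at hd
    simp at hd
    omega
  have hs : ((detPencil A M).map (algebraMap ℝ ℂ)).Splits := IsAlgClosed.splits _
  rw [← hd, ← natDegree_map (algebraMap ℝ ℂ), hs.natDegree_eq_card_roots,
    Multiset.toFinset_card_eq_card_iff_nodup]
  exact nodup_aroots_iff_of_splits h0 hs

/-- The generic pencil. -/
noncomputable def genPencil {n : ℕ} (A : Matrix (Fin n) (Fin n) ℝ) :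
    Polynomial (MvPolynomial (Fin n × Fin n) ℝ) :=
  Matrix.det ((Polynomial.X ^ 2 : Polynomial (MvPolynomial (Fin n × Fin n) ℝ)) •
    (A.map (fun a => Polynomial.C (MvPolynomial.C a))) -
    Matrix.of (fun i j => Polynomial.C (MvPolynomial.X (i, j))))

theorem genPencil_map {n : ℕ} (A M : Matrix (Fin n) (Fin n) ℝ) :
    (genPencil A).map (MvPolynomial.eval (fun p => M p.1 p.2)) = detPencil A M := by
  rw [genPencil, detPencil, ← Polynomial.coe_mapRingHom, RingHom.map_det]
  congr 1
  ext1 i j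
  simp

open Polynomial in
/-- The discriminant of the generic pencil. -/
noncomputable def genDisc {n : ℕ} (A : Matrix (Fin n) (Fin n) ℝ) :
    MvPolynomial (Fin n × Fin n) ℝ :=
  resultant (genPencil A) (derivative (genPencil A)) (2 * n) (2 * n - 1)

open Polynomial in
theorem good_iff_disc {n : ℕ} (hn : 1 ≤ n) (A M : Matrix (Fin n) (Fin n) ℝ) (hA : A.det ≠ 0) :
    ((detPencil A M).map (algebraMap ℝ ℂ)).roots.toFinset.card = 2 * n ↔
      MvPolynomial.eval (fun p => M p.1 p.2) (genDisc A) ≠ 0 := by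
  rw [good_iff hn A M hA, genDisc, ← resultant_map_map, ← derivative_map, genPencil_map]
  have hd := detPencil_natDegree A M hA
  have hd' : (derivative (detPencil A M)).natDegree = 2 * n - 1 := by
    have h1 := degree_derivative (p := detPencil A M) (by omega)
    rw [hd] at h1
    exact natDegree_eq_of_degree_eq_some h1
  have h0 : detPencil A M ≠ 0 := by
    intro h
    rw [h] at hd
    simp at hd
    omega
  have := resultant_eq_zero_iff (f := detPencil A M) (g := derivative (detPencil A M))
  rw [hd, hd'] at this
  rw [Ne, this, Separable]
  simp [h0]

open scoped MatrixOrder ComplexOrder in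
theorem exists_factor {n : ℕ} (A : Matrix (Fin n) (Fin n) ℝ) (hA : A.PosDef) :
    ∃ B : Matrix (Fin n) (Fin n) ℝ, A = B.conjTranspose * B :=
  CStarAlgebra.nonneg_iff_eq_star_mul_self.mp hA.posSemidef.nonneg

open Polynomial in
theorem exists_good {n : ℕ} (A : Matrix (Fin n) (Fin n) ℝ) (hA : A.PosDef) :
    ∃ D : Matrix (Fin n) (Fin n) ℝ, D.PosDef ∧ (detPencil A D).Separable := by
  obtain ⟨B, hB⟩ := exists_factor A hA
  have hdet : B.det ≠ 0 := by
    intro h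
    have := hA.det_pos
    rw [hB, Matrix.det_mul, h] at this
    simp at this
  have hBu : IsUnit B := (Matrix.isUnit_iff_isUnit_det B).2 hdet.isUnit
  let d : Fin n → ℝ := fun i => (i : ℝ) + 1
  have hdpos : ∀ i, 0 < d i := fun i => by positivity
  refine ⟨B.conjTranspose * Matrix.diagonal d * B, ?_, ?_⟩
  · exact (Matrix.PosDef.diagonal hdpos).conjTranspose_mul_mul_same
      (Matrix.mulVec_injective_of_isUnit hBu)
  · have key : detPencil A (B.conjTranspose * Matrix.diagonal d * B) =
        C (B.det ^ 2) * ∏ i, (X ^ 2 - C (d i)) := by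
      have h1 : (X ^ 2 : ℝ[X]) • A.map C - (B.conjTranspose * Matrix.diagonal d * B).map C =
          (B.conjTranspose.map C) * Matrix.diagonal (fun i => (X ^ 2 - C (d i) : ℝ[X])) *
            B.map C := by
        have h2 : Matrix.diagonal (fun i => (X ^ 2 - C (d i) : ℝ[X])) =
            (X ^ 2 : ℝ[X]) • (1 : Matrix (Fin n) (Fin n) ℝ[X]) - (Matrix.diagonal d).map C := by
          ext1 i j
          by_cases h : i = j
          · subst h; simp
          · simp [h]
        rw [h2, hB, Matrix.map_mul, Matrix.map_mul, Matrix.map_mul]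
        simp [Matrix.mul_sub, Matrix.sub_mul]
      rw [detPencil, h1, Matrix.det_mul, Matrix.det_mul, Matrix.det_diagonal]
      have h3 : ∀ N : Matrix (Fin n) (Fin n) ℝ, (N.map C).det = C N.det := fun N =>
        (RingHom.map_det C N).symm
      rw [h3, h3, Matrix.det_conjTranspose]
      simp only [star_trivial, map_pow]
      ring
    rw [key]
    have hsep : (∏ i, (X ^ 2 - C (d i)) : ℝ[X]).Separable := by
      apply separable_prod
      · intro i j hij
        have hne : d j - d i ≠ 0 := by
          intro h
          apply hij
          apply Fin.ext
          have : (i : ℝ) = j := by simp only [d] at h; linarith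
          exact_mod_cast this
        refine ⟨C (d j - d i)⁻¹, -C (d j - d i)⁻¹, ?_⟩
        have : (C (d j - d i)⁻¹ * C (d j - d i) : ℝ[X]) = 1 := by
          rw [← C_mul, inv_mul_cancel₀ hne, C_1]
        rw [C_sub] at this
        linear_combination this
      · intro i
        exact separable_X_pow_sub_C (d i) (by norm_num) (hdpos i).ne'
    exact (hsep.unit_mul (isUnit_C.2 (pow_ne_zero 2 hdet).isUnit))

open Polynomial Filter Topology in
theorem eventually_line {σ : Type*} (P : MvPolynomial σ ℝ) (x y : σ → ℝ)
    (h : MvPolynomial.eval y P ≠ 0) :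
    ∀ᶠ t in 𝓝[>] (0 : ℝ), MvPolynomial.eval (fun s => (1 - t) * x s + t * y s) P ≠ 0 := by
  let q : ℝ[X] := MvPolynomial.aeval (fun s => (1 - X) * C (x s) + X * C (y s)) P
  have hq : ∀ t, q.eval t = MvPolynomial.eval (fun s => (1 - t) * x s + t * y s) P := by
    intro t
    have : ((aeval t : ℝ[X] →ₐ[ℝ] ℝ).comp
        (MvPolynomial.aeval (fun s => (1 - X) * C (x s) + X * C (y s)))) =
        MvPolynomial.aeval (fun s => (1 - t) * x s + t * y s) := by
      ext s
      simp
      ring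
    have h2 := DFunLike.congr_fun this P
    simpa [q, Polynomial.coe_aeval_eq_eval] using h2
  have hq0 : q ≠ 0 := by
    intro h0
    apply h
    have := hq 1
    rw [h0] at this
    simpa using this.symm
  have hfin : {t | q.eval t = 0}.Finite := by
    refine (q.roots.toFinset.finite_toSet).subset ?_
    intro t ht
    simpa [hq0] using ht
  have h1 : ∀ᶠ t in 𝓝[>] (0 : ℝ), t ∈ {t | q.eval t = 0}ᶜ :=
    ((nhdsGT_le_nhdsNE 0).trans (nhdsNE_le_cofinite 0)) hfin.compl_mem_cofinite
  filter_upwards [h1] with t ht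
  rw [← hq]
  exact ht

/-- Genericity claim from the proof of Proposition 3.2 of the paper: for a fixed real
symmetric positive definite A, the set of real symmetric positive definite matrices C
such that λ ↦ det(λ²A − C) has 2n pairwise distinct (complex) roots is open and dense
in the set of positive definite matrices with the induced topology. -/
theorem stmt_9 (n : ℕ) (hn : 1 ≤ n) (A : Matrix (Fin n) (Fin n) ℝ) (hA : A.PosDef) :
    IsOpen {Cm : {M : Matrix (Fin n) (Fin n) ℝ // M.PosDef} |
        (((detPencil A Cm.1).map (algebraMap ℝ ℂ)).roots.toFinset.card = 2 * n)} ∧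
    Dense {Cm : {M : Matrix (Fin n) (Fin n) ℝ // M.PosDef} |
        (((detPencil A Cm.1).map (algebraMap ℝ ℂ)).roots.toFinset.card = 2 * n)} := by
  have hdet : A.det ≠ 0 := hA.det_pos.ne'
  simp_rw [good_iff_disc hn A _ hdet]
  constructor
  · have hc : Continuous (fun Cm : {M : Matrix (Fin n) (Fin n) ℝ // M.PosDef} =>
        MvPolynomial.eval (fun p : Fin n × Fin n => Cm.1 p.1 p.2) (genDisc A)) := by
      refine (MvPolynomial.continuous_eval (genDisc A)).comp ?_
      refine continuous_pi fun p => ?_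
      exact continuous_subtype_val.matrix_elem p.1 p.2
    exact isOpen_ne.preimage hc
  · obtain ⟨D, hD, hsep⟩ := exists_good A hA
    have hDd := (good_iff_disc hn A D hdet).1 ((good_iff hn A D hdet).2 hsep)
    intro M
    rw [closure_subtype]
    have ht : Filter.Tendsto (fun t : ℝ => (1 - t) • M.1 + t • D)
        (nhdsWithin 0 (Set.Ioi 0)) (nhds M.1) := by
      have hc : Continuous (fun t : ℝ => (1 - t) • M.1 + t • D) := by fun_prop
      have := (hc.tendsto 0).mono_left (nhdsWithin_le_nhds (s := Set.Ioi 0))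
      simpa using this
    refine mem_closure_of_tendsto ht ?_
    have h1 : ∀ᶠ t in nhdsWithin (0 : ℝ) (Set.Ioi 0), t ∈ Set.Ioo (0 : ℝ) 1 :=
      Ioo_mem_nhdsGT one_pos
    filter_upwards [h1, eventually_line (genDisc A) (fun p => M.1 p.1 p.2) _ hDd] with t ht hne
    exact ⟨⟨_, (M.2.smul (sub_pos.2 ht.2)).add (hD.smul ht.1)⟩, hne, rfl⟩
end

section
/- Let n ≥ 1, let P : ℝⁿ → ℝ be continuously differentiable and ℤⁿ-periodic (P(x + k) = P(x) for all x ∈ ℝⁿ and k ∈ ℤⁿ), and let ω ∈ ℝⁿ and T > 0 satisfy T·ω ∈ ℤⁿ. Define the time average [P](x) = (1/T)∫₀ᵀ P(x + t·ω) dt and the generating function W(x) = −(1/T)∫₀ᵀ t·P(x + t·ω) dt. Then W is differentiable and ⟨ω, ∇W(x)⟩ = −P(x) + [P](x) for every x ∈ ℝⁿ. -/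
/-- Solution of the homological equation at a resonant frequency (Appendix A of the
paper): with [P](x) = (1/T)∫₀ᵀ P(x+tω) dt and W(x) = −(1/T)∫₀ᵀ t·P(x+tω) dt, the
generating function W is differentiable and ⟨ω, ∇W(x)⟩ = −P(x) + [P](x). -/
theorem stmt_11 (n : ℕ) (hn : 1 ≤ n) (P : (Fin n → ℝ) → ℝ) (hP : ContDiff ℝ 1 P)
    (hper : ∀ (x : Fin n → ℝ) (k : Fin n → ℤ), P (x + (fun i => (k i : ℝ))) = P x)
    (ω : Fin n → ℝ) (T : ℝ) (hT : 0 < T) (hres : ∀ i, ∃ k : ℤ, T * ω i = (k : ℝ)) :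
    Differentiable ℝ
        (fun x : Fin n → ℝ => -(1 / T) * ∫ t in (0:ℝ)..T, t * P (x + t • ω)) ∧
      ∀ x : Fin n → ℝ,
        fderiv ℝ (fun y : Fin n → ℝ => -(1 / T) * ∫ t in (0:ℝ)..T, t * P (y + t • ω)) x ω =
          -P x + (1 / T) * ∫ t in (0:ℝ)..T, P (x + t • ω) := by
  have hd : Differentiable ℝ P := hP.differentiable one_ne_zero
  have hc : Continuous P := hP.continuous
  have hc' : Continuous (fderiv ℝ P) := hP.continuous_fderiv one_ne_zero
  have key : ∀ x : Fin n → ℝ, HasFDerivAt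
      (fun y : Fin n → ℝ => ∫ t in (0:ℝ)..T, t * P (y + t • ω))
      (∫ t in (0:ℝ)..T, t • fderiv ℝ P (x + t • ω)) x := by
    intro x
    have hcont : Continuous (fun p : (Fin n → ℝ) × ℝ => p.2 • fderiv ℝ P (p.1 + p.2 • ω)) := by
      fun_prop
    obtain ⟨C, hC⟩ := ((isCompact_closedBall x 1).prod (isCompact_Icc (a := (0:ℝ)) (b := T))
      ).exists_bound_of_continuousOn hcont.continuousOn
    refine intervalIntegral.hasFDerivAt_integral_of_dominated_of_fderiv_le
      (F := fun (y : Fin n → ℝ) (t : ℝ) => t * P (y + t • ω))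
      (F' := fun (y : Fin n → ℝ) (t : ℝ) => t • fderiv ℝ P (y + t • ω))
      (bound := fun _ => C)
      (Metric.closedBall_mem_nhds x one_pos) ?_ ?_ ?_ ?_ ?_ ?_
    · exact Filter.Eventually.of_forall fun y =>
        (show Continuous (fun t : ℝ => t * P (y + t • ω)) by fun_prop).aestronglyMeasurable
    · exact (show Continuous (fun t : ℝ => t * P (x + t • ω)) by fun_prop).intervalIntegrable _ _
    · exact (show Continuous (fun t : ℝ => t • fderiv ℝ P (x + t • ω)) by
        fun_prop).aestronglyMeasurable
    · refine Filter.Eventually.of_forall fun t ht y hy => ?_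
      rw [Set.uIoc_of_le hT.le] at ht
      exact hC (y, t) ⟨hy, ht.1.le, ht.2⟩
    · exact intervalIntegrable_const
    · refine Filter.Eventually.of_forall fun t _ y _ => ?_
      have h1 : HasFDerivAt (fun z : Fin n → ℝ => P (z + t • ω)) (fderiv ℝ P (y + t • ω)) y :=
        (hasFDerivAt_comp_add_right (t • ω)).2 (hd (y + t • ω)).hasFDerivAt
      exact h1.const_mul t
  refine ⟨fun x => ((key x).const_mul _).differentiableAt, fun x => ?_⟩
  rw [((key x).const_mul (-(1 / T))).fderiv]
  have hI : IntervalIntegrable (fun t : ℝ => t • fderiv ℝ P (x + t • ω))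
      MeasureTheory.volume 0 T :=
    (show Continuous (fun t : ℝ => t • fderiv ℝ P (x + t • ω)) by
      fun_prop).intervalIntegrable _ _
  rw [ContinuousLinearMap.smul_apply, ContinuousLinearMap.intervalIntegral_apply hI]
  have hder : ∀ t : ℝ, HasDerivAt (fun t : ℝ => P (x + t • ω)) (fderiv ℝ P (x + t • ω) ω) t := by
    intro t
    have h2 : HasDerivAt (fun t : ℝ => x + t • ω) ω t := by
      simpa using ((hasDerivAt_id t).smul_const ω).const_add x
    exact (hd (x + t • ω)).hasFDerivAt.comp_hasDerivAt t h2
  have hparts := intervalIntegral.integral_mul_deriv_eq_deriv_mul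
    (a := 0) (b := T) (u := fun t : ℝ => t) (u' := fun _ => 1)
    (v := fun t : ℝ => P (x + t • ω)) (v' := fun t : ℝ => fderiv ℝ P (x + t • ω) ω)
    (fun t _ => hasDerivAt_id t) (fun t _ => hder t) intervalIntegrable_const
    ((show Continuous (fun t : ℝ => fderiv ℝ P (x + t • ω) ω) by
      fun_prop).intervalIntegrable _ _)
  choose k hk using hres
  have hend : P (x + T • ω) = P x := by
    rw [← hper x k]
    congr 2
    ext i
    simpa using hk i
  simp only [ContinuousLinearMap.smul_apply, smul_eq_mul]
  rw [hparts]
  simp only [hend, one_mul, zero_mul]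
  field_simp
  ring
end

section
/- Let n ≥ 1, m > 0, and let h : ℝⁿ → ℝ be continuously differentiable with a strongly monotone gradient: ⟨∇h(u) − ∇h(v), u − v⟩ ≥ m‖u − v‖² for all u, v ∈ ℝⁿ. Then for every y ∈ ℝⁿ and every real K > 1 there exist an integer T with 1 ≤ T < K, an integer vector p ∈ ℤⁿ, and a point y* ∈ ℝⁿ such that ∇h(y*) = p/T and ‖y − y*‖ ≤ √n / (m·T·K^{1/n}). -/
open scoped RealInnerProductSpace

/-- A strongly monotone gradient is surjective. -/
lemma grad_surj {n : ℕ} (m : ℝ) (hm : 0 < m)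
    (h : EuclideanSpace ℝ (Fin n) → ℝ) (hh : ContDiff ℝ 1 h)
    (hmono : ∀ u v : EuclideanSpace ℝ (Fin n),
      m * ‖u - v‖ ^ 2 ≤ ⟪gradient h u - gradient h v, u - v⟫)
    (w : EuclideanSpace ℝ (Fin n)) : ∃ x, gradient h x = w := by
  have hd : Differentiable ℝ h := hh.differentiable (by norm_num)
  have hder : ∀ x, HasFDerivAt (fun x => h x - ⟪w, x⟫) (fderiv ℝ h x - innerSL ℝ w) x :=
    fun x => (hd x).hasFDerivAt.sub (innerSL ℝ w).hasFDerivAt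
  have happ : ∀ x v, (fderiv ℝ h x - innerSL ℝ w) v = ⟪gradient h x - w, v⟫ := by
    intro x v
    rw [inner_sub_left, inner_gradient_left]
    simp
  set R : ℝ := ‖gradient h 0 - w‖ / m + 1 with hR
  have hRpos : 0 < R := by positivity
  obtain ⟨x, hx, hmin⟩ := (isCompact_closedBall (0 : EuclideanSpace ℝ (Fin n)) R).exists_isMinOn
    ⟨0, by simp [hRpos.le]⟩
    (fun x _ => (hder x).continuousAt.continuousWithinAt)
  have h1 : 0 ≤ (fderiv ℝ h x - innerSL ℝ w) (0 - x) := by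
    refine IsLocalMinOn.hasFDerivWithinAt_nonneg hmin.localize (hder x).hasFDerivWithinAt ?_
    apply sub_mem_posTangentConeAt_of_segment_subset
    exact (convex_closedBall _ _).segment_subset hx (by simp [hRpos.le])
  rw [happ, zero_sub, inner_neg_right] at h1
  have h2 := hmono x 0
  rw [sub_zero] at h2
  have h3 : ⟪gradient h x - gradient h 0, x⟫ =
      ⟪gradient h x - w, x⟫ - ⟪gradient h 0 - w, x⟫ := by
    rw [← inner_sub_left]; congr 1; abel
  have h4 := abs_le.1 (abs_real_inner_le_norm (gradient h 0 - w) x)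
  have h5 : ‖x‖ < R := by
    by_contra! hc
    have hx0 : 0 < ‖x‖ := hRpos.trans_le hc
    have h6 : m * ‖x‖ ≤ ‖gradient h 0 - w‖ := by
      refine le_of_mul_le_mul_right ?_ hx0
      nlinarith [h4.1]
    have h7 : m * R = ‖gradient h 0 - w‖ + m := by rw [hR]; field_simp
    nlinarith
  have hloc : IsLocalMin (fun x => h x - ⟪w, x⟫) x :=
    hmin.isLocalMin (Metric.closedBall_mem_nhds_of_mem (by simpa using h5))
  have h8 := hloc.hasFDerivAt_eq_zero (hder x)
  refine ⟨x, ?_⟩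
  have h9 := happ x (gradient h x - w)
  rw [h8] at h9
  exact sub_eq_zero.1 (inner_self_eq_zero.1 h9.symm)

/-- Dirichlet's simultaneous approximation theorem. -/
lemma dirichlet_sim {n : ℕ} (hn : 1 ≤ n) (w : Fin n → ℝ) (K : ℝ) (hK : 1 < K) :
    ∃ (T : ℕ) (p : Fin n → ℤ), 1 ≤ T ∧ (T : ℝ) < K ∧
      ∀ i, |(T : ℝ) * w i - p i| ≤ 1 / K ^ ((1 : ℝ) / (n : ℝ)) := by
  have hK0 : 0 < K := by linarith
  set r : ℝ := K ^ ((1 : ℝ) / (n : ℝ)) with hr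
  have hr1 : 1 ≤ r := Real.one_le_rpow hK.le (by positivity)
  have hrn : r ^ n = K := by
    rw [hr, one_div]; exact Real.rpow_inv_natCast_pow hK0.le (by omega)
  obtain ⟨N, hN⟩ : ∃ N : ℕ, ⌈K⌉₊ = N + 1 :=
    Nat.exists_eq_succ_of_ne_zero (by positivity)
  have hNK : (N : ℝ) < K := Nat.lt_ceil.1 (by omega)
  have hKN : K ≤ N + 1 := by
    have := Nat.le_ceil K
    rw [hN] at this; exact_mod_cast this
  have hN0 : 0 < N := by
    rcases Nat.eq_zero_or_pos N with h | h
    · subst h; norm_num at hKN; linarith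
    · exact h
  have : Fact ((0 : ℝ) < 1) := ⟨one_pos⟩
  have hr0 : (0 : ℝ) ≤ 1 / r / 2 := by positivity
  have hU : (MeasureTheory.volume : MeasureTheory.Measure (Fin n → UnitAddCircle)) Set.univ = 1 := by
    rw [MeasureTheory.volume_pi, MeasureTheory.Measure.pi_univ]
    simp [AddCircle.measure_univ]
  obtain ⟨j, hj, hle⟩ := NormedAddCommGroup.exists_norm_nsmul_le
    (μ := (MeasureTheory.volume : MeasureTheory.Measure (Fin n → UnitAddCircle)))
    (fun i => ((w i : ℝ) : UnitAddCircle)) hN0 (1 / r) (by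
      rw [MeasureTheory.volume_pi_closedBall _ hr0, hU]
      simp only [AddCircle.volume_closedBall, Finset.prod_const, Finset.card_univ,
        Fintype.card_fin]
      rw [mul_div_cancel₀ _ two_ne_zero, min_eq_right (by rw [div_le_one (by positivity)]; exact hr1),
        ← ENNReal.ofReal_pow (by positivity), ← ENNReal.ofReal_nsmul, ENNReal.one_le_ofReal,
        div_pow, hrn, nsmul_eq_mul, one_pow]
      push_cast
      rw [mul_one_div, le_div_iff₀ hK0]
      linarith)
  refine ⟨j, fun i => round ((j : ℝ) * w i), hj.1, ?_, fun i => ?_⟩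
  · exact lt_of_le_of_lt (by exact_mod_cast hj.2) hNK
  · have := (norm_le_pi_norm _ i).trans hle
    rw [Pi.smul_apply, ← AddCircle.coe_nsmul, UnitAddCircle.norm_eq] at this
    simpa [nsmul_eq_mul] using this

/-- Quantitative covering property (Appendix A of the paper): Dirichlet approximation
of the frequency ∇h(y) by a rational frequency p/T of period T < K, transferred to the
action variable by the strong monotonicity of ∇h. -/
theorem stmt_13 (n : ℕ) (hn : 1 ≤ n) (m : ℝ) (hm : 0 < m)
    (h : EuclideanSpace ℝ (Fin n) → ℝ) (hh : ContDiff ℝ 1 h)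
    (hmono : ∀ u v : EuclideanSpace ℝ (Fin n),
      m * ‖u - v‖ ^ 2 ≤ ⟪gradient h u - gradient h v, u - v⟫) :
    ∀ y : EuclideanSpace ℝ (Fin n), ∀ K : ℝ, 1 < K →
      ∃ (T : ℕ) (p : Fin n → ℤ) (ystar : EuclideanSpace ℝ (Fin n)),
        1 ≤ T ∧ (T : ℝ) < K ∧
        (∀ i : Fin n, gradient h ystar i = (p i : ℝ) / (T : ℝ)) ∧
        ‖y - ystar‖ ≤ Real.sqrt n / (m * T * K ^ ((1 : ℝ) / (n : ℝ))) := by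
  intro y K hK
  obtain ⟨T, p, hT1, hTK, hp⟩ := dirichlet_sim hn (fun i => gradient h y i) K hK
  obtain ⟨z, hz⟩ := grad_surj m hm h hh hmono (WithLp.toLp 2 (fun i => (p i : ℝ) / (T : ℝ)))
  have hT0 : (0 : ℝ) < T := by exact_mod_cast hT1
  refine ⟨T, p, z, hT1, hTK, fun i => by rw [hz], ?_⟩
  set r : ℝ := K ^ ((1 : ℝ) / (n : ℝ)) with hr
  have hr0 : 0 < r := Real.rpow_pos_of_pos (by linarith) _
  have hg : ‖gradient h y - gradient h z‖ ≤ Real.sqrt n * (1 / (T * r)) := by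
    rw [EuclideanSpace.norm_eq]
    have hb : ∀ i : Fin n, ‖(gradient h y - gradient h z) i‖ ^ 2 ≤ (1 / (T * r)) ^ 2 := by
      intro i
      refine pow_le_pow_left₀ (norm_nonneg _) ?_ 2
      have h1 := hp i
      have h2 : (gradient h y - gradient h z) i = ((T : ℝ) * gradient h y i - p i) / T := by
        rw [PiLp.sub_apply, hz]
        field_simp
      rw [h2, Real.norm_eq_abs, abs_div, abs_of_pos hT0, div_le_iff₀ hT0]
      refine h1.trans (le_of_eq ?_)
      field_simp
    refine (Real.sqrt_le_sqrt (Finset.sum_le_sum fun i _ => hb i)).trans (le_of_eq ?_)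
    rw [Finset.sum_const, Finset.card_univ, Fintype.card_fin, nsmul_eq_mul,
      Real.sqrt_mul (by positivity), Real.sqrt_sq (by positivity)]
  have h1 := (hmono y z).trans (real_inner_le_norm _ _)
  have h2 : m * ‖y - z‖ ≤ ‖gradient h y - gradient h z‖ := by
    rcases (norm_nonneg (y - z)).eq_or_lt with h0 | h0
    · rw [← h0]; simp
    · refine le_of_mul_le_mul_right ?_ h0
      linarith
  rw [le_div_iff₀ (by positivity)]
  have h3 := mul_le_mul_of_nonneg_right (h2.trans hg) (mul_pos hT0 hr0).le
  have h4 : Real.sqrt n * (1 / (T * r)) * (T * r) = Real.sqrt n := by field_simp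
  rw [h4] at h3
  linarith
end

section
/- Let n ≥ 1, let a < b be real numbers, and let L and Lᵢ (i ∈ ℕ) be continuous functions ℝⁿ × ℝⁿ × ℝ → ℝ such that Lᵢ → L uniformly on every compact subset of ℝⁿ × ℝⁿ × ℝ. For each i let γᵢ : [a,b] → ℝⁿ be a C¹ curve that minimizes the action ζ ↦ ∫ₐᵇ Lᵢ(ζ(t), ζ'(t), t) dt among all Lipschitz curves ζ : [a,b] → ℝⁿ with ζ(a) = γᵢ(a) and ζ(b) = γᵢ(b). If γ : [a,b] → ℝⁿ is a C¹ curve such that γᵢ → γ and γᵢ' → γ' uniformly on [a,b], then γ minimizes the action ζ ↦ ∫ₐᵇ L(ζ(t), ζ'(t), t) dt among all Lipschitz curves ζ : [a,b] → ℝⁿ with ζ(a) = γ(a) and ζ(b) = γ(b). -/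
open Set

open MeasureTheory Filter Topology in
lemma aux_dct {P : Type*} [NormedAddCommGroup P] [SecondCountableTopology P] [MeasurableSpace P] [BorelSpace P]
    (a b : ℝ) (hab : a < b) (F : ℕ → P → ℝ) (G : P → ℝ) (hF : ∀ i, Continuous (F i))
    (hG : Continuous G) (Kc : Set P) (hK : IsCompact Kc)
    (hu : TendstoUniformlyOn F G atTop Kc) (q : ℕ → ℝ → P) (r : ℝ → P)
    (hm : ∀ i, AEStronglyMeasurable (q i) (volume.restrict (Ioo a b)))
    (hq : ∀ᶠ i in atTop, ∀ t ∈ Ioo a b, q i t ∈ Kc)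
    (hl : ∀ t ∈ Ioo a b, Tendsto (fun i => q i t) atTop (𝓝 (r t))) :
    Tendsto (fun i => ∫ t in a..b, F i (q i t)) atTop (𝓝 (∫ t in a..b, G (r t))) := by
  obtain ⟨M, hM⟩ := hK.exists_bound_of_continuousOn hG.continuousOn
  simp only [intervalIntegral.integral_of_le hab.le, integral_Ioc_eq_integral_Ioo]
  refine tendsto_integral_filter_of_dominated_convergence (fun _ => M + 1) ?_ ?_ ?_ ?_
  · exact Eventually.of_forall fun i => (hF i).comp_aestronglyMeasurable (hm i)
  · filter_upwards [hq, Metric.tendstoUniformlyOn_iff.1 hu 1 one_pos] with i hi hi'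
    filter_upwards [ae_restrict_mem measurableSet_Ioo] with t ht
    have h1 := hM _ (hi t ht)
    have h2 := hi' _ (hi t ht)
    rw [dist_comm, dist_eq_norm] at h2
    have h3 := norm_le_norm_add_norm_sub' (F i (q i t)) (G (q i t))
    linarith
  · simp
  · filter_upwards [ae_restrict_mem measurableSet_Ioo] with t ht
    refine hu.tendsto_comp hG.continuousWithinAt ?_
    refine tendsto_nhdsWithin_iff.2 ⟨hl t ht, ?_⟩
    filter_upwards [hq] with i hi using hi t ht

lemma aux_lip {n : ℕ} (a b : ℝ) (hab : a < b) (f : ℝ → (Fin n → ℝ))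
    (hf : ContDiffOn ℝ 1 f (Icc a b)) : ∃ K, LipschitzOnWith K f (Icc a b) := by
  obtain ⟨M, hM⟩ := isCompact_Icc.exists_bound_of_continuousOn
    (hf.continuousOn_derivWithin (uniqueDiffOn_Icc hab) le_rfl)
  refine ⟨M.toNNReal, (convex_Icc a b).lipschitzOnWith_of_nnnorm_derivWithin_le
    (hf.differentiableOn one_ne_zero) fun x hx => ?_⟩
  rw [← NNReal.coe_le_coe]
  exact (hM x hx).trans (Real.le_coe_toNNReal M)

open MeasureTheory Filter Topology in
lemma aux_main (n : ℕ) (a b : ℝ) (hab : a < b)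
    (L : (Fin n → ℝ) → (Fin n → ℝ) → ℝ → ℝ)
    (Lseq : ℕ → (Fin n → ℝ) → (Fin n → ℝ) → ℝ → ℝ)
    (hL : Continuous fun q : (Fin n → ℝ) × (Fin n → ℝ) × ℝ => L q.1 q.2.1 q.2.2)
    (hLseq : ∀ i, Continuous fun q : (Fin n → ℝ) × (Fin n → ℝ) × ℝ =>
      Lseq i q.1 q.2.1 q.2.2)
    (hconv : ∀ Kc : Set ((Fin n → ℝ) × (Fin n → ℝ) × ℝ), IsCompact Kc →
      TendstoUniformlyOn (fun i q => Lseq i q.1 q.2.1 q.2.2)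
        (fun q => L q.1 q.2.1 q.2.2) Filter.atTop Kc)
    (γseq : ℕ → ℝ → (Fin n → ℝ)) (γ : ℝ → (Fin n → ℝ))
    (hγseq : ∀ i, ContDiffOn ℝ 1 (γseq i) (Icc a b))
    (hγ : ContDiffOn ℝ 1 γ (Icc a b))
    (hc0 : TendstoUniformlyOn (fun i t => γseq i t) γ Filter.atTop (Icc a b))
    (hc1 : TendstoUniformlyOn (fun i t => derivWithin (γseq i) (Icc a b) t)
      (fun t => derivWithin γ (Icc a b) t) Filter.atTop (Icc a b))
    (ζ : ℝ → (Fin n → ℝ)) (hζ : ∃ K, LipschitzOnWith K ζ (Icc a b)) :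
    Tendsto (fun i => ∫ t in a..b, Lseq i (ζ t + (γseq i t - γ t))
        (derivWithin ζ (Icc a b) t + (derivWithin (γseq i) (Icc a b) t
          - derivWithin γ (Icc a b) t)) t) atTop
      (𝓝 (∫ t in a..b, L (ζ t) (derivWithin ζ (Icc a b) t) t)) := by
  obtain ⟨K, hK⟩ := hζ
  obtain ⟨M, hM⟩ := isCompact_Icc.exists_bound_of_continuousOn hK.continuousOn
  have hud := uniqueDiffOn_Icc hab
  have hmem : ∀ t ∈ Ioo a b, Icc a b ∈ 𝓝 t := fun t ht => Icc_mem_nhds ht.1 ht.2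
  have hdm : AEStronglyMeasurable (derivWithin ζ (Icc a b)) (volume.restrict (Ioo a b)) := by
    refine (measurable_deriv ζ).aestronglyMeasurable.congr ?_
    filter_upwards [ae_restrict_mem measurableSet_Ioo] with t ht
    exact (derivWithin_of_mem_nhds (hmem t ht)).symm
  have hcm : ∀ f : ℝ → (Fin n → ℝ), ContinuousOn f (Icc a b) →
      AEStronglyMeasurable f (volume.restrict (Ioo a b)) := fun f hf =>
    (hf.mono Ioo_subset_Icc_self).aestronglyMeasurable measurableSet_Ioo
  refine aux_dct a b hab (fun i (q : (Fin n → ℝ) × (Fin n → ℝ) × ℝ) => Lseq i q.1 q.2.1 q.2.2)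
    (fun q => L q.1 q.2.1 q.2.2) hLseq hL
    (Metric.closedBall 0 (M + 1) ×ˢ Metric.closedBall 0 (K + 1) ×ˢ Icc a b)
    ((isCompact_closedBall _ _).prod ((isCompact_closedBall _ _).prod isCompact_Icc))
    (hconv _ ((isCompact_closedBall _ _).prod ((isCompact_closedBall _ _).prod isCompact_Icc)))
    (fun i t => (ζ t + (γseq i t - γ t), derivWithin ζ (Icc a b) t +
      (derivWithin (γseq i) (Icc a b) t - derivWithin γ (Icc a b) t), t))
    (fun t => (ζ t, derivWithin ζ (Icc a b) t, t)) ?_ ?_ ?_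
  · intro i
    refine AEStronglyMeasurable.prodMk ?_ (AEStronglyMeasurable.prodMk ?_ ?_)
    · exact (hcm _ hK.continuousOn).add
        ((hcm _ (hγseq i).continuousOn).sub (hcm _ hγ.continuousOn))
    · exact hdm.add
        ((hcm _ ((hγseq i).continuousOn_derivWithin hud le_rfl)).sub
          (hcm _ (hγ.continuousOn_derivWithin hud le_rfl)))
    · exact measurable_id.aestronglyMeasurable
  · filter_upwards [Metric.tendstoUniformlyOn_iff.1 hc0 1 one_pos,
      Metric.tendstoUniformlyOn_iff.1 hc1 1 one_pos] with i h0 h1 t ht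
    have ht' := Ioo_subset_Icc_self ht
    have e0 := h0 t ht'
    have e1 := h1 t ht'
    rw [dist_comm, dist_eq_norm] at e0 e1
    refine ⟨?_, ?_, ht'⟩
    · rw [mem_closedBall_zero_iff]
      exact (norm_add_le _ _).trans (add_le_add (hM t ht') e0.le)
    · rw [mem_closedBall_zero_iff]
      refine (norm_add_le _ _).trans (add_le_add ?_ e1.le)
      rw [derivWithin_of_mem_nhds (hmem t ht)]
      exact norm_deriv_le_of_lipschitzOn (hmem t ht) hK
  · intro t ht
    have ht' := Ioo_subset_Icc_self ht
    have e0 := ((hc0.tendsto_at ht').sub_const (γ t)).const_add (ζ t)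
    have e1 := ((hc1.tendsto_at ht').sub_const (derivWithin γ (Icc a b) t)).const_add
      (derivWithin ζ (Icc a b) t)
    rw [sub_self, add_zero] at e0 e1
    exact e0.prodMk_nhds (e1.prodMk_nhds tendsto_const_nhds)

/-- Stability of action minimizers under C¹-uniform convergence of the curves and
locally uniform convergence of the Lagrangians (heart of the upper semi-continuity
Theorems 6.2, 6.5 and 6.9 of the paper). -/
theorem stmt_14 (n : ℕ) (hn : 1 ≤ n) (a b : ℝ) (hab : a < b)
    (L : (Fin n → ℝ) → (Fin n → ℝ) → ℝ → ℝ)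
    (Lseq : ℕ → (Fin n → ℝ) → (Fin n → ℝ) → ℝ → ℝ)
    (hL : Continuous fun q : (Fin n → ℝ) × (Fin n → ℝ) × ℝ => L q.1 q.2.1 q.2.2)
    (hLseq : ∀ i, Continuous fun q : (Fin n → ℝ) × (Fin n → ℝ) × ℝ =>
      Lseq i q.1 q.2.1 q.2.2)
    (hconv : ∀ Kc : Set ((Fin n → ℝ) × (Fin n → ℝ) × ℝ), IsCompact Kc →
      TendstoUniformlyOn (fun i q => Lseq i q.1 q.2.1 q.2.2)
        (fun q => L q.1 q.2.1 q.2.2) Filter.atTop Kc)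
    (γseq : ℕ → ℝ → (Fin n → ℝ)) (γ : ℝ → (Fin n → ℝ))
    (hγseq : ∀ i, ContDiffOn ℝ 1 (γseq i) (Icc a b))
    (hγ : ContDiffOn ℝ 1 γ (Icc a b))
    (hmin : ∀ i, ∀ ζ : ℝ → (Fin n → ℝ), (∃ K, LipschitzOnWith K ζ (Icc a b)) →
      ζ a = γseq i a → ζ b = γseq i b →
      (∫ t in a..b, Lseq i (γseq i t) (derivWithin (γseq i) (Icc a b) t) t) ≤
        ∫ t in a..b, Lseq i (ζ t) (derivWithin ζ (Icc a b) t) t)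
    (hc0 : TendstoUniformlyOn (fun i t => γseq i t) γ Filter.atTop (Icc a b))
    (hc1 : TendstoUniformlyOn (fun i t => derivWithin (γseq i) (Icc a b) t)
      (fun t => derivWithin γ (Icc a b) t) Filter.atTop (Icc a b)) :
    ∀ ζ : ℝ → (Fin n → ℝ), (∃ K, LipschitzOnWith K ζ (Icc a b)) →
      ζ a = γ a → ζ b = γ b →
      (∫ t in a..b, L (γ t) (derivWithin γ (Icc a b) t) t) ≤
        ∫ t in a..b, L (ζ t) (derivWithin ζ (Icc a b) t) t := by
  intro ζ hζ hζa hζb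
  have T1 := aux_main n a b hab L Lseq hL hLseq hconv γseq γ hγseq hγ hc0 hc1 γ
    (aux_lip a b hab γ hγ)
  have T2 := aux_main n a b hab L Lseq hL hLseq hconv γseq γ hγseq hγ hc0 hc1 ζ hζ
  refine le_of_tendsto_of_tendsto' T1 T2 fun i => ?_
  simp only [add_sub_cancel]
  obtain ⟨K, hK⟩ := hζ
  obtain ⟨K1, hK1⟩ := aux_lip a b hab _ (hγseq i)
  obtain ⟨K2, hK2⟩ := aux_lip a b hab _ hγ
  refine (hmin i (fun t => ζ t + (γseq i t - γ t)) ⟨_, hK.add (hK1.sub hK2)⟩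
    (by simp [hζa]) (by simp [hζb])).trans (le_of_eq ?_)
  refine intervalIntegral.integral_congr_ae ?_
  filter_upwards [hK.ae_differentiableWithinAt_of_mem_real] with t ht htm
  rw [uIoc_of_le hab.le] at htm
  have htm' := Ioc_subset_Icc_self htm
  have d0 := (ht htm').hasDerivWithinAt
  have d1 := ((hγseq i).differentiableOn one_ne_zero t htm').hasDerivWithinAt
  have d2 := (hγ.differentiableOn one_ne_zero t htm').hasDerivWithinAt
  have d3 := (d0.add (d1.sub d2)).derivWithin (uniqueDiffOn_Icc hab t htm')
  have d4 : derivWithin (fun t => ζ t + (γseq i t - γ t)) (Icc a b) t = _ := d3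
  simp only [d4]
end

section
/- Let M ≥ 0 and let f : ℝ → ℝ be twice differentiable with f''(x) ≤ M for all x ∈ ℝ, and suppose f is bounded below. Then for every x ∈ ℝ, |f'(x)| ≤ (1 + M/2)·√(f(x) − inf f). -/
/-- Lemma B.2 of the paper (quantitative content): if f is twice differentiable,
bounded below, and f'' ≤ M everywhere, then |f'(x)| ≤ (1 + M/2)·√(f(x) − inf f). -/
theorem stmt_15 (M : ℝ) (hM : 0 ≤ M) (f : ℝ → ℝ)
    (hf : Differentiable ℝ f) (hf' : Differentiable ℝ (deriv f))
    (hM2 : ∀ x : ℝ, deriv (deriv f) x ≤ M)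
    (hbdd : BddBelow (Set.range f)) :
    ∀ x : ℝ, |deriv f x| ≤ (1 + M / 2) * Real.sqrt (f x - sInf (Set.range f)) := by
  intro x
  have hmono : Monotone (fun y => M * y - deriv f y) := by
    have hd : ∀ y, HasDerivAt (fun y => M * y - deriv f y) (M * 1 - deriv (deriv f) y) y :=
      fun y => ((hasDerivAt_id y).const_mul M).sub (hf' y).hasDerivAt
    refine monotone_of_deriv_nonneg (fun y => (hd y).differentiableAt) (fun y => ?_)
    rw [(hd y).deriv]
    linarith [hM2 y]
  have hg : ∀ y, HasDerivAt (fun y => M / 2 * y ^ 2 - f y) (M * y - deriv f y) y := by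
    intro y
    have h := ((hasDerivAt_pow 2 y).const_mul (M / 2)).sub (hf y).hasDerivAt
    refine h.congr_deriv ?_
    norm_num
    ring
  have hc : Continuous (fun y => M / 2 * y ^ 2 - f y) :=
    continuous_iff_continuousAt.2 fun y => (hg y).continuousAt
  have key : ∀ y, (M * x - deriv f x) * (y - x) ≤
      (M / 2 * y ^ 2 - f y) - (M / 2 * x ^ 2 - f x) := by
    intro y
    rcases lt_trichotomy x y with h | h | h
    · obtain ⟨c, hc1, hc2⟩ := exists_hasDerivAt_eq_slope _ _ h hc.continuousOn
        (fun z _ => hg z)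
      have hm := hmono hc1.1.le
      rw [eq_div_iff (by linarith)] at hc2
      rw [← hc2]
      exact mul_le_mul_of_nonneg_right hm (by linarith)
    · subst h; simp
    · obtain ⟨c, hc1, hc2⟩ := exists_hasDerivAt_eq_slope _ _ h hc.continuousOn
        (fun z _ => hg z)
      have hm := hmono hc1.2.le
      rw [eq_div_iff (by linarith)] at hc2
      have := mul_le_mul_of_nonneg_right hm (show 0 ≤ x - y by linarith)
      simp only at this
      linarith
  have hinf : ∀ y, sInf (Set.range f) ≤ f y := fun y => csInf_le hbdd ⟨y, rfl⟩
  set D := f x - sInf (Set.range f) with hD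
  have hD0 : 0 ≤ D := by linarith [hinf x]
  have hq : ∀ t : ℝ, 0 ≤ M / 2 * (t * t) + deriv f x * t + D := by
    intro t
    have h1 := key (x + t)
    have h2 := hinf (x + t)
    nlinarith
  have hdisc := discrim_le_zero hq
  unfold discrim at hdisc
  refine abs_le_of_sq_le_sq ?_ (by positivity)
  rw [mul_pow, Real.sq_sqrt hD0]
  nlinarith [mul_nonneg (sq_nonneg (1 - M / 2)) hD0]
end
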